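/- arXiv:1908.03713 — 4 statements merged into one kernel-verified Lean document; each statement's English description precedes it below -/
import Mathlib

section
/- If S ⊂ ℝ^n is an algebraic interior with minimal-degree defining polynomial p, then p divides every defining polynomial of S; in particular, minimal-degree defining polynomials are unique up to multiplication by a positive constant. -/
open Matrix

/-- `S ⊆ ℝⁿ` is an algebraic interior with defining polynomial `p` if it is the
closure of a connected component of `{x : p x > 0}`. -/
def IsDefiningPoly {n : ℕ} (S : Set (Fin n → ℝ)) (p : MvPolynomial (Fin n) ℝ) : Prop :=
  ∃ x₀ : Fin n → ℝ, 0 < MvPolynomial.eval x₀ p ∧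
    S = closure (connectedComponentIn {x : Fin n → ℝ | 0 < MvPolynomial.eval x p} x₀)

/-! If `p = g f` and `q = g h`, with `f` and `h` relatively prime, define the same set `S`, then `p`
and `q` vanish on the frontier of `S`, so where `g ≠ 0` this frontier lies in `{f = h = 0}`. That
set has codimension at least two, so it disconnects nothing: for a fixed direction `v`, some
polynomial `r(x) ≠ 0` lies in the ideal generated by `f(x + t v)` and `h(x + t v)`, hence every line
in direction `v` through a point with `r(x) ≠ 0` avoids it. Therefore `g` or `-g` already defines
`S`, and minimality of the degree of `p` forces `f` to be constant. -/

open MvPolynomial Set Topology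

section RelPrime

theorem isRelPrime_algebraMap_of_isLocalization {A B : Type*} [CommRing A] [IsDomain A]
    [DecompositionMonoid A] [CommRing B] [Algebra A B] {M : Submonoid A}
    (hM : M ≤ nonZeroDivisors A) [IsLocalization M B] {f g : A} (h : IsRelPrime f g) :
    IsRelPrime (algebraMap A B f) (algebraMap A B g) := by
  have hB : IsDomain B := IsLocalization.isDomain_of_le_nonZeroDivisors B hM
  have hinj : Function.Injective (algebraMap A B) := IsLocalization.injective B hM
  rcases eq_or_ne f 0 with rfl | hf
  · rw [map_zero, isRelPrime_zero_left]
    exact (isRelPrime_zero_left.mp h).map _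
  rintro d ⟨f₁, hf₁⟩ ⟨g₁, hg₁⟩
  obtain ⟨⟨G, s⟩, hG⟩ := IsLocalization.surj M g₁
  obtain ⟨⟨F, t⟩, hF⟩ := IsLocalization.surj M f₁
  have hcross : f * (G * t) = g * (F * s) := by
    apply hinj
    simp only [map_mul, ← hF, ← hG, hf₁, hg₁]
    ring
  obtain ⟨k, hk⟩ : f ∣ F * s := h.dvd_of_dvd_mul_left ⟨_, hcross.symm⟩
  have hf₁_ne : f₁ ≠ 0 := by
    rintro rfl
    exact hf (hinj (by rw [hf₁, mul_zero, map_zero]))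
  have hunit : d * algebraMap A B k = algebraMap A B (t * s : M) := by
    apply mul_left_cancel₀ hf₁_ne
    have := congrArg (algebraMap A B) hk
    simp only [map_mul, ← hF, hf₁, Submonoid.coe_mul] at this ⊢
    linear_combination -this
  exact isUnit_of_dvd_unit ⟨_, hunit.symm⟩ (IsLocalization.map_units B _)

theorem isRelPrime_polynomialC {R : Type*} [CommRing R] [IsDomain R] {f g : R}
    (h : IsRelPrime f g) : IsRelPrime (Polynomial.C f) (Polynomial.C g) := by
  wlog hf : f ≠ 0 generalizing f g
  · obtain rfl := not_not.mp hf
    rw [map_zero, isRelPrime_zero_left]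
    exact (isRelPrime_zero_left.mp h).map _
  intro d hdf hdg
  obtain ⟨a, rfl⟩ : ∃ a, Polynomial.C a = d := by
    rw [← Polynomial.natDegree_eq_zero, ← Nat.le_zero, ← Polynomial.natDegree_C f]
    exact Polynomial.natDegree_le_of_dvd hdf (Polynomial.C_ne_zero.mpr hf)
  rw [Polynomial.C_dvd_iff_dvd_coeff] at hdf hdg
  exact (h (by simpa using hdf 0) (by simpa using hdg 0)).map _

theorem exists_polynomialC_mem_span_pair_of_isRelPrime {R : Type*} [CommRing R] [IsDomain R]
    [DecompositionMonoid (Polynomial R)] {f g : Polynomial R} (h : IsRelPrime f g) :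
    ∃ r : R, r ≠ 0 ∧ Polynomial.C r ∈ Ideal.span {f, g} := by
  let K := FractionRing R
  let := Polynomial.algebra R K
  let M := (nonZeroDivisors R).map (Polynomial.C : R →+* Polynomial R)
  have : IsLocalization M (Polynomial K) := Polynomial.isLocalization (nonZeroDivisors R) K
  have hM : M ≤ nonZeroDivisors (Polynomial R) :=
    map_le_nonZeroDivisors_of_injective _ Polynomial.C_injective le_rfl
  have hcoprime := (isRelPrime_algebraMap_of_isLocalization (B := Polynomial K) hM h).isCoprime
  have hspan : (Ideal.span {f, g}).map (algebraMap (Polynomial R) (Polynomial K)) = ⊤ := by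
    rw [Ideal.map_span, image_pair, Ideal.eq_top_iff_one, Ideal.mem_span_pair]
    exact hcoprime
  have hmeet := mt (IsLocalization.map_algebraMap_ne_top_iff_disjoint M (Polynomial K) _).mpr
    (not_not.mpr hspan)
  obtain ⟨_, ⟨r, hr, rfl⟩, hmem⟩ := not_disjoint_iff.mp hmeet
  exact ⟨r, nonZeroDivisors.ne_zero hr, hmem⟩

theorem isUnit_of_totalDegree_mul_le {σ K : Type*} [Field K] {f g : MvPolynomial σ K}
    (hgf : g * f ≠ 0) (hdeg : (g * f).totalDegree ≤ g.totalDegree) : IsUnit f := by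
  obtain ⟨hg, hf⟩ := mul_ne_zero_iff.mp hgf
  rw [totalDegree_mul_of_isDomain hg hf] at hdeg
  have hconst := totalDegree_eq_zero_iff_eq_C.mp (show f.totalDegree = 0 by lia)
  refine isUnit_iff_eq_C_of_isReduced.mpr ⟨_, IsUnit.mk0 _ fun h0 => hf ?_, hconst⟩
  rw [hconst, h0, C_0]

end RelPrime

section Lines

variable {σ R : Type*} [CommRing R]

/-- The endomorphism `F(x, t) ↦ F(x + t v, t)` of `R[x][t]`, underlying `shearEquiv`. -/
noncomputable def shear (v : σ → R) :
    Polynomial (MvPolynomial σ R) →ₐ[R] Polynomial (MvPolynomial σ R) :=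
  Polynomial.aevalTower
    (aeval fun i => Polynomial.C (X i) + Polynomial.X * Polynomial.C (C (v i))) Polynomial.X

theorem shear_C (v : σ → R) (f : MvPolynomial σ R) :
    shear v (Polynomial.C f) =
      aeval (fun i => Polynomial.C (X i) + Polynomial.X * Polynomial.C (C (v i))) f :=
  Polynomial.aevalTower_C _ _ _

theorem shear_X (v : σ → R) : shear v Polynomial.X = Polynomial.X :=
  Polynomial.aevalTower_X _ _

theorem shear_comp_shear_neg (v : σ → R) : (shear v).comp (shear (-v)) = AlgHom.id R _ := by
  refine Polynomial.algHom_ext' (MvPolynomial.algHom_ext fun i => ?_) ?_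
  · have hconst (c : R) : shear v (Polynomial.C (C c)) = Polynomial.C (C c) := by
      rw [shear_C, aeval_C]; rfl
    change shear v (shear (-v) (Polynomial.C (X i))) = Polynomial.C (X i)
    rw [shear_C, aeval_X, map_add, map_mul, shear_X, hconst, shear_C, aeval_X, Pi.neg_apply,
      C_neg, Polynomial.C_neg]
    ring
  · simp only [AlgHom.comp_apply, shear_X, AlgHom.id_apply]

/-- The automorphism `F(x, t) ↦ F(x + t v, t)` of `R[x][t]`. It carries a polynomial in `x` to its
restriction to the generic line in direction `v`, parametrised by `t`. -/
noncomputable def shearEquiv (v : σ → R) :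
    Polynomial (MvPolynomial σ R) ≃ₐ[R] Polynomial (MvPolynomial σ R) :=
  AlgEquiv.ofAlgHom (shear v) (shear (-v)) (shear_comp_shear_neg v)
    (by simpa only [neg_neg] using shear_comp_shear_neg (-v))

theorem shearEquiv_C (v : σ → R) (f : MvPolynomial σ R) :
    shearEquiv v (Polynomial.C f) =
      aeval (fun i => Polynomial.C (X i) + Polynomial.X * Polynomial.C (C (v i))) f :=
  shear_C v f

theorem isRelPrime_shearEquiv_C [IsDomain R] {f g : MvPolynomial σ R} (h : IsRelPrime f g)
    (v : σ → R) :
    IsRelPrime (shearEquiv v (Polynomial.C f)) (shearEquiv v (Polynomial.C g)) := by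
  refine IsRelPrime.of_map (shearEquiv v).symm ?_
  simpa only [AlgEquiv.symm_apply_apply] using isRelPrime_polynomialC h

theorem eval_eval_shearEquiv_C (v x : σ → R) (s : R) (f : MvPolynomial σ R) :
    eval x (Polynomial.eval (C s) (shearEquiv v (Polynomial.C f))) = eval (x + s • v) f := by
  induction f using MvPolynomial.induction_on with
  | C a => rw [shearEquiv_C, aeval_C]; simp [Polynomial.algebraMap_apply]
  | add p q hp hq => simp only [map_add, Polynomial.eval_add, hp, hq]
  | mul_X p i hp =>
    rw [Polynomial.C_mul, map_mul, Polynomial.eval_mul, map_mul, hp, shearEquiv_C, aeval_X]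
    simp only [map_add, map_mul, Polynomial.eval_add, Polynomial.eval_mul, Polynomial.eval_C,
      Polynomial.eval_X, eval_X, eval_C, Pi.add_apply, Pi.smul_apply, smul_eq_mul]

theorem exists_ne_zero_forall_line_eval_ne_zero [IsDomain R] [UniqueFactorizationMonoid R]
    {f g : MvPolynomial σ R} (h : IsRelPrime f g) (v : σ → R) :
    ∃ r : MvPolynomial σ R, r ≠ 0 ∧ ∀ x, eval x r ≠ 0 → ∀ s : R,
      eval (x + s • v) f ≠ 0 ∨ eval (x + s • v) g ≠ 0 := by
  obtain ⟨r, hr, hmem⟩ := exists_polynomialC_mem_span_pair_of_isRelPrime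
    (isRelPrime_shearEquiv_C h v)
  obtain ⟨a, b, hab⟩ := Ideal.mem_span_pair.mp hmem
  refine ⟨r, hr, fun x hx s => ?_⟩
  by_contra! hzero
  apply hx
  have := congrArg (fun F => eval x (Polynomial.eval (C s) F)) hab
  simpa [eval_eval_shearEquiv_C, hzero] using this.symm

end Lines

section Topology

variable {α : Type*} [TopologicalSpace α]

theorem subset_interior_of_isPreconnected_of_disjoint_frontier {s t : Set α}
    (ht : IsPreconnected t) (hfrontier : Disjoint t (frontier s))
    (hinter : (t ∩ interior s).Nonempty) : t ⊆ interior s := by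
  refine ht.subset_of_closure_inter_subset isOpen_interior hinter fun x hx => ?_
  by_contra hxs
  exact disjoint_left.mp hfrontier hx.2 ⟨closure_mono interior_subset hx.1, hxs⟩

theorem frontier_connectedComponentIn_subset [LocallyConnectedSpace α] {F : Set α} (hF : IsOpen F)
    (x : α) : frontier (connectedComponentIn F x) ⊆ frontier F := by
  rw [hF.connectedComponentIn.frontier_eq, hF.frontier_eq]
  rintro y ⟨hy_closure, hy⟩
  refine ⟨closure_mono (connectedComponentIn_subset F x) hy_closure, fun hyF => hy ?_⟩
  obtain ⟨z, hzy, hzx⟩ := mem_closure_iff.mp hy_closure _ hF.connectedComponentIn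
    (mem_connectedComponentIn hyF)
  rw [connectedComponentIn_eq hzx, ← connectedComponentIn_eq hzy]
  exact mem_connectedComponentIn hyF

theorem forall_pos_of_isPreconnected_of_ne_zero {s : Set α} (hs : IsPreconnected s)
    {β : Type*} [LinearOrder β] [Zero β] [TopologicalSpace β] [OrderClosedTopology β] {φ : α → β}
    (hφ : ContinuousOn φ s) (hne : ∀ x ∈ s, φ x ≠ 0) {a : α} (ha : a ∈ s) (hpos : 0 < φ a) :
    ∀ x ∈ s, 0 < φ x := by
  intro x hx
  by_contra! hle
  obtain ⟨y, hy, hy0⟩ := hs.intermediate_value hx ha hφ ⟨hle, hpos.le⟩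
  exact hne y hy hy0

theorem dense_setOf_eval_ne_zero {σ R : Type*} [Finite σ] [CommRing R] [IsDomain R]
    [TopologicalSpace R] [T1Space R] [∀ x : R, (𝓝[≠] x).NeBot] {r : MvPolynomial σ R}
    (hr : r ≠ 0) : Dense {x | eval x r ≠ 0} := by
  rw [dense_iff_inter_open]
  rintro U hU ⟨x, hx⟩
  obtain ⟨u, hu, hu_subset⟩ := isOpen_pi_iff'.mp hU x hx
  by_contra! hempty
  refine hr (funext_set u (fun i => infinite_of_mem_nhds (x i) ((hu i).1.mem_nhds (hu i).2))
    fun y hy => ?_)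
  rw [map_zero]
  by_contra hne
  exact (hempty ▸ ⟨hu_subset hy, hne⟩ : y ∈ (∅ : Set (σ → R)))

theorem isOpen_setOf_eval_pos {σ : Type*} (p : MvPolynomial σ ℝ) : IsOpen {x | 0 < eval x p} :=
  isOpen_lt continuous_const p.continuous_eval

theorem eval_pos_of_mem_connectedComponentIn {σ : Type*} {p : MvPolynomial σ ℝ} {x y : σ → ℝ}
    (hx : x ∈ connectedComponentIn {z | 0 < eval z p} y) : 0 < eval x p :=
  connectedComponentIn_subset {z | 0 < eval z p} y hx

end Topology

section ZeroSet

variable {σ : Type*} [Finite σ] {f g : MvPolynomial σ ℝ} {S U : Set (σ → ℝ)}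

theorem subset_of_convex_of_frontier_inter_subset_zeros (hfg : IsRelPrime f g) (hS : IsClosed S)
    (hU : IsOpen U) (hconvex : Convex ℝ U)
    (hfrontier : frontier S ∩ U ⊆ {x | eval x f = 0 ∧ eval x g = 0})
    (hinter : (U ∩ interior S).Nonempty) : U ⊆ S := by
  obtain ⟨a, haU, haS⟩ := hinter
  by_contra hUS
  obtain ⟨b, hbU, hbS⟩ := not_subset.mp hUS
  obtain ⟨r, hr, hline⟩ := exists_ne_zero_forall_line_eval_ne_zero hfg (b - a)
  let N : Set (σ → ℝ) := (U ∩ interior S) ∩ (· + (b - a)) ⁻¹' (U ∩ Sᶜ)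
  have hN : IsOpen N := (hU.inter isOpen_interior).inter
    ((hU.inter hS.isOpen_compl).preimage (continuous_id.add continuous_const))
  have haN : a ∈ N := ⟨⟨haU, haS⟩, by simpa using ⟨hbU, hbS⟩⟩
  obtain ⟨x, ⟨⟨hxU, hxS⟩, hyU, hyS⟩, hrx⟩ :=
    (dense_setOf_eval_ne_zero hr).inter_open_nonempty N hN ⟨a, haN⟩
  have havoid : Disjoint (segment ℝ x (x + (b - a))) (frontier S) := by
    rw [disjoint_left]
    intro z hz hzS
    have hzero := hfrontier ⟨hzS, hconvex.segment_subset hxU hyU hz⟩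
    rw [segment_eq_image', add_sub_cancel_left] at hz
    obtain ⟨s, -, rfl⟩ := hz
    exact (hline x hrx s).elim (· hzero.1) (· hzero.2)
  have hsegment : segment ℝ x (x + (b - a)) ⊆ interior S :=
    subset_interior_of_isPreconnected_of_disjoint_frontier (convex_segment _ _).isPreconnected
      havoid ⟨x, left_mem_segment ℝ _ _, hxS⟩
  exact hyS (interior_subset (hsegment (right_mem_segment ℝ _ _)))

theorem subset_of_isPreconnected_of_frontier_inter_subset_zeros (hfg : IsRelPrime f g)
    (hS : IsClosed S) (hU : IsOpen U) (hconn : IsPreconnected U)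
    (hfrontier : frontier S ∩ U ⊆ {x | eval x f = 0 ∧ eval x g = 0})
    (hinter : (U ∩ interior S).Nonempty) : U ⊆ S := by
  have := Fintype.ofFinite σ
  suffices U ⊆ interior S from this.trans interior_subset
  refine hconn.subset_of_closure_inter_subset isOpen_interior hinter ?_
  rintro x ⟨hx_closure, hxU⟩
  obtain ⟨ε, hε, hball⟩ := Metric.isOpen_iff.mp hU x hxU
  refine mem_interior.mpr ⟨_, ?_, Metric.isOpen_ball, Metric.mem_ball_self hε⟩
  exact subset_of_convex_of_frontier_inter_subset_zeros hfg hS Metric.isOpen_ball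
    (convex_ball x ε) ((inter_subset_inter_right _ hball).trans hfrontier)
    (mem_closure_iff.mp hx_closure _ Metric.isOpen_ball (Metric.mem_ball_self hε))

end ZeroSet

namespace IsDefiningPoly

variable {n : ℕ} {S : Set (Fin n → ℝ)} {p q f g h : MvPolynomial (Fin n) ℝ}

theorem isClosed (hp : IsDefiningPoly S p) : IsClosed S := by
  obtain ⟨x₀, -, rfl⟩ := hp
  exact isClosed_closure

theorem ne_zero (hp : IsDefiningPoly S p) : p ≠ 0 := by
  obtain ⟨x₀, hx₀, -⟩ := hp
  rintro rfl
  simp at hx₀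

theorem eval_eq_zero_of_mem_frontier (hp : IsDefiningPoly S p) {x : Fin n → ℝ}
    (hx : x ∈ frontier S) : eval x p = 0 := by
  obtain ⟨x₀, -, rfl⟩ := hp
  have hx_pos : x ∈ frontier {z | 0 < eval z p} := frontier_connectedComponentIn_subset
    (isOpen_setOf_eval_pos p) x₀ (frontier_closure_subset hx)
  exact (frontier_lt_subset_eq continuous_const p.continuous_eval hx_pos).symm

theorem exists_eval_pos (hp : IsDefiningPoly S p) (hq : IsDefiningPoly S q) :
    ∃ x, 0 < eval x p ∧ 0 < eval x q := by
  obtain ⟨x₀, hx₀, rfl⟩ := hp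
  obtain ⟨y₀, -, hS⟩ := hq
  have hx₀_mem : x₀ ∈ connectedComponentIn {x | 0 < eval x p} x₀ := mem_connectedComponentIn hx₀
  obtain ⟨w, hwp, hwq⟩ := mem_closure_iff.mp (hS.subset (subset_closure hx₀_mem)) _
    (isOpen_setOf_eval_pos p).connectedComponentIn hx₀_mem
  exact ⟨w, eval_pos_of_mem_connectedComponentIn hwp, eval_pos_of_mem_connectedComponentIn hwq⟩

theorem left_of_mul_of_isRelPrime (hgh : IsDefiningPoly S (g * h)) (hfh : IsRelPrime f h)
    {x₀ : Fin n → ℝ} (hx₀ : 0 < eval x₀ (g * f)) (hx₀g : 0 < eval x₀ g)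
    (hS : S = closure (connectedComponentIn {x | 0 < eval x (g * f)} x₀)) :
    IsDefiningPoly S g := by
  set C := connectedComponentIn {x | 0 < eval x (g * f)} x₀
  set D := connectedComponentIn {x | 0 < eval x g} x₀
  have hx₀C : x₀ ∈ C := mem_connectedComponentIn hx₀
  have hx₀D : x₀ ∈ D := mem_connectedComponentIn hx₀g
  have hCD : C ⊆ D := by
    refine isPreconnected_connectedComponentIn.subset_connectedComponentIn hx₀C ?_
    refine forall_pos_of_isPreconnected_of_ne_zero isPreconnected_connectedComponentIn
      g.continuous_eval.continuousOn (fun x hx hgx => ?_) hx₀C hx₀g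
    have hgf := (eval_pos_of_mem_connectedComponentIn hx).ne'
    rw [map_mul, hgx, zero_mul] at hgf
    exact hgf rfl
  have hCS : C ⊆ interior S :=
    interior_maximal (hS ▸ subset_closure) (isOpen_setOf_eval_pos _).connectedComponentIn
  have hfrontier : frontier S ∩ D ⊆ {x | eval x f = 0 ∧ eval x h = 0} := by
    rintro x ⟨hxS, hxD⟩
    have hgx : eval x g ≠ 0 := (eval_pos_of_mem_connectedComponentIn hxD).ne'
    have hgf : IsDefiningPoly S (g * f) := ⟨x₀, hx₀, hS⟩
    have hfx := hgf.eval_eq_zero_of_mem_frontier hxS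
    have hhx := hgh.eval_eq_zero_of_mem_frontier hxS
    rw [map_mul] at hfx hhx
    exact ⟨(mul_eq_zero.mp hfx).resolve_left hgx, (mul_eq_zero.mp hhx).resolve_left hgx⟩
  have hDS : D ⊆ S := subset_of_isPreconnected_of_frontier_inter_subset_zeros hfh hgh.isClosed
    (isOpen_setOf_eval_pos g).connectedComponentIn isPreconnected_connectedComponentIn hfrontier
    ⟨x₀, hx₀D, hCS hx₀C⟩
  exact ⟨x₀, hx₀g, (hS.trans_subset (closure_mono hCD)).antisymm
    (closure_minimal hDS hgh.isClosed)⟩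

theorem left_or_neg_left_of_mul (hgf : IsDefiningPoly S (g * f)) (hgh : IsDefiningPoly S (g * h))
    (hfh : IsRelPrime f h) : IsDefiningPoly S g ∨ IsDefiningPoly S (-g) := by
  obtain ⟨x₀, hx₀, hS⟩ := hgf
  have hgx₀ : eval x₀ g ≠ 0 := left_ne_zero_of_mul (map_mul (eval x₀) g f ▸ hx₀.ne')
  rcases hgx₀.lt_or_gt with hneg | hpos
  · rw [← neg_mul_neg] at hx₀ hS hgh
    refine Or.inr (hgh.left_of_mul_of_isRelPrime hfh.neg_neg hx₀ ?_ hS)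
    rwa [map_neg, neg_pos]
  · exact Or.inl (hgh.left_of_mul_of_isRelPrime hfh hx₀ hpos hS)

theorem dvd_of_minimal (hp : IsDefiningPoly S p)
    (hmin : ∀ q, IsDefiningPoly S q → p.totalDegree ≤ q.totalDegree) (hq : IsDefiningPoly S q) :
    p ∣ q := by
  obtain ⟨f, h, g, hfh, rfl, rfl⟩ :=
    UniqueFactorizationMonoid.exists_reduced_factors p hp.ne_zero q
  have hdeg : (g * f).totalDegree ≤ g.totalDegree := by
    rcases hp.left_or_neg_left_of_mul hq hfh with hg | hg
    · exact hmin g hg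
    · exact (hmin (-g) hg).trans_eq g.totalDegree_neg
  have hf : IsUnit f := isUnit_of_totalDegree_mul_le hp.ne_zero hdeg
  exact mul_dvd_mul_left g hf.dvd

end IsDefiningPoly

theorem exists_pos_eq_smul_of_associated {σ R : Type*} [CommRing R] [LinearOrder R]
    [IsStrictOrderedRing R] {p q : MvPolynomial σ R} (hpq : Associated p q) {x : σ → R}
    (hp : 0 < eval x p) (hq : 0 < eval x q) : ∃ c : R, 0 < c ∧ q = c • p := by
  obtain ⟨u, rfl⟩ := hpq
  obtain ⟨c, -, hc⟩ := isUnit_iff_eq_C_of_isReduced.mp u.isUnit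
  rw [hc, map_mul, eval_C] at hq
  exact ⟨c, pos_of_mul_pos_right hq hp.le, by rw [hc, smul_eq_C_mul, mul_comm]⟩

/-- A defining polynomial of minimal degree of an algebraic interior `S` divides every
defining polynomial of `S`; in particular, minimal-degree defining polynomials are
unique up to a positive constant factor. -/
theorem minimal_defining_poly_divides {n : ℕ} (S : Set (Fin n → ℝ))
    (p : MvPolynomial (Fin n) ℝ) (hp : IsDefiningPoly S p)
    (hmin : ∀ q : MvPolynomial (Fin n) ℝ, IsDefiningPoly S q →
      p.totalDegree ≤ q.totalDegree) :
    (∀ q : MvPolynomial (Fin n) ℝ, IsDefiningPoly S q → p ∣ q) ∧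
    (∀ q : MvPolynomial (Fin n) ℝ, IsDefiningPoly S q →
      (∀ r : MvPolynomial (Fin n) ℝ, IsDefiningPoly S r →
        q.totalDegree ≤ r.totalDegree) → ∃ c : ℝ, 0 < c ∧ q = c • p) := by
  refine ⟨fun q hq => hp.dvd_of_minimal hmin hq, fun q hq hqmin => ?_⟩
  have hassoc : Associated p q :=
    associated_of_dvd_dvd (hp.dvd_of_minimal hmin hq) (hq.dvd_of_minimal hqmin hp)
  obtain ⟨x, hxp, hxq⟩ := hp.exists_eval_pos hq
  exact exists_pos_eq_smul_of_associated hassoc hxp hxq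
end

section
/- Let R ∈ Sym²_b(∧²ℝ⁴) satisfy sec_R ≥ 0 but not sec_R > 0, and suppose x₀ ∈ ℝ is such that R + x₀* ⪰ 0. Then x₀ is a root of multiplicity at least 2 of the polynomial x ↦ det(R + x*). In particular, the discriminant disc_x(det(R + x*)) vanishes on the topological boundary of the set of R with sec_R ≥ 0. -/
open Matrix Polynomial

/-- Plücker coordinates of `X ∧ Y ∈ ∧²ℝ⁴`. -/
def wedge (X Y : Fin 4 → ℝ) : Fin 6 → ℝ :=
  ![X 0 * Y 1 - X 1 * Y 0, X 0 * Y 2 - X 2 * Y 0, X 0 * Y 3 - X 3 * Y 0,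
    X 1 * Y 2 - X 2 * Y 1, X 1 * Y 3 - X 3 * Y 1, X 2 * Y 3 - X 3 * Y 2]

/-- The Hodge star operator on `∧²ℝ⁴`, in the Plücker basis. -/
def hodgeStar : Matrix (Fin 6) (Fin 6) ℝ :=
  !![0,0,0,0,0,1; 0,0,0,0,-1,0; 0,0,0,1,0,0; 0,0,1,0,0,0; 0,-1,0,0,0,0; 1,0,0,0,0,0]

/-- The first Bianchi identity. -/
def Bianchi (R : Matrix (Fin 6) (Fin 6) ℝ) : Prop :=
  ∀ X Y Z W : Fin 4 → ℝ,
    R.mulVec (wedge X Y) ⬝ᵥ wedge Z W + R.mulVec (wedge Y Z) ⬝ᵥ wedge X W +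
      R.mulVec (wedge Z X) ⬝ᵥ wedge Y W = 0

/-- `sec_R ≥ 0`. -/
def SecNonneg (R : Matrix (Fin 6) (Fin 6) ℝ) : Prop :=
  ∀ X Y : Fin 4 → ℝ, wedge X Y ⬝ᵥ wedge X Y = 1 → 0 ≤ R.mulVec (wedge X Y) ⬝ᵥ wedge X Y

/-- `sec_R > 0`. -/
def SecPos (R : Matrix (Fin 6) (Fin 6) ℝ) : Prop :=
  ∀ X Y : Fin 4 → ℝ, wedge X Y ⬝ᵥ wedge X Y = 1 → 0 < R.mulVec (wedge X Y) ⬝ᵥ wedge X Y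

/-- The polynomial `x ↦ det(R + x *)`. -/
noncomputable def detPencil (R : Matrix (Fin 6) (Fin 6) ℝ) : Polynomial ℝ :=
  (R.map Polynomial.C + (Polynomial.X : Polynomial ℝ) • hodgeStar.map Polynomial.C).det

/-- The discriminant of a complex polynomial:
`disc p = lead(p)^(2n-2) ∏_{i<j} (rᵢ - rⱼ)²` over the roots of `p`. -/
noncomputable def disc (p : Polynomial ℂ) : ℂ :=
  p.leadingCoeff ^ (2 * p.natDegree - 2) *
    ∏ ij ∈ Finset.univ.filter
      (fun ij : Fin p.roots.toList.length × Fin p.roots.toList.length => ij.1 < ij.2),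
      (p.roots.toList.get ij.1 - p.roots.toList.get ij.2) ^ 2

/-- The space of algebraic curvature operators `Sym²_b(∧²ℝ⁴)`. -/
abbrev CurvOp := {M : Matrix (Fin 6) (Fin 6) ℝ // M.IsSymm ∧ Bianchi M}

/-!
A decomposable bivector `s` is isotropic for `*`, so if `⟨R s, s⟩ = 0` then `⟨(R + x₀ *) s, s⟩ = 0`,
and semidefiniteness puts `s` in the kernel of `R + x₀ *`. Using `s` as a basis vector, the row and
the column of `R + x *` belonging to `s` are both divisible by `x - x₀`, and their common entry
`(x - x₀) ⟨* s, s⟩` vanishes; hence `(x - x₀)²` divides the determinant.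

At a boundary point of `sec ≥ 0` such an `s` exists because `sec > 0` is an open condition, the unit
decomposable bivectors being compact. A suitable `x₀` exists by the homogeneous S-lemma, since by
the Plücker relation every isotropic bivector is decomposable.
-/

section DoubleRoot

open scoped ComplexOrder

variable {n S 𝕜 : Type*} [Fintype n] [CommRing S] [RCLike 𝕜]

theorem pencil_mulVec_C_comp {A B : Matrix n n S} {x₀ : S} {u : n → S}
    (hu : (A + x₀ • B) *ᵥ u = 0) :
    (A.map C + (X : S[X]) • B.map C) *ᵥ (C ∘ u) = (X - C x₀) • (C ∘ (B *ᵥ u)) := by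
  have map_mulVec (N : Matrix n n S) : N.map C *ᵥ (C ∘ u) = C ∘ (N *ᵥ u) :=
    funext fun i => (RingHom.map_mulVec C N u i).symm
  have hA : A *ᵥ u = -(x₀ • B *ᵥ u) := by
    rwa [add_mulVec, smul_mulVec, add_eq_zero_iff_eq_neg] at hu
  ext1 i
  simp only [add_mulVec, smul_mulVec, map_mulVec, hA, Pi.add_apply, Pi.smul_apply, Pi.neg_apply,
    Function.comp_apply, smul_eq_mul, map_neg, map_mul]
  ring

theorem C_comp_vecMul_pencil {A B : Matrix n n S} {x₀ : S} {v : n → S}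
    (hv : v ᵥ* (A + x₀ • B) = 0) :
    (C ∘ v) ᵥ* (A.map C + (X : S[X]) • B.map C) = (X - C x₀) • (C ∘ (v ᵥ* B)) := by
  rw [← mulVec_transpose] at hv ⊢
  rw [← mulVec_transpose, transpose_add, transpose_smul, ← transpose_map, ← transpose_map]
  exact pencil_mulVec_C_comp (by rwa [transpose_add, transpose_smul] at hv)

variable [DecidableEq n]

theorem det_updateCol_mulVec (M : Matrix n n S) (u : n → S) (i : n) :
    (M.updateCol i (M *ᵥ u)).det = u i * M.det := by
  rw [← cramer_apply, cramer_eq_adjugate_mulVec, mulVec_mulVec, adjugate_mul, smul_mulVec,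
    one_mulVec, Pi.smul_apply, smul_eq_mul, mul_comm]

theorem det_updateRow_vecMul (M : Matrix n n S) (v : n → S) (j : n) :
    (M.updateRow j (v ᵥ* M)).det = v j * M.det := by
  rw [← det_transpose, ← updateCol_transpose, ← mulVec_transpose, det_updateCol_mulVec,
    det_transpose]

theorem sq_dvd_mul_det_of_mulVec_of_vecMul {M : Matrix n n S} {q : S} {u v k l : n → S}
    (hu : M *ᵥ u = q • k) (hv : v ᵥ* M = q • l) (hvk : q ∣ v ⬝ᵥ k) (i j : n) :
    q ^ 2 ∣ v j * u i * M.det := by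
  obtain ⟨c, hc⟩ := hvk
  have replace_col : u i * M.det = q * (M.updateCol i k).det := by
    rw [← det_updateCol_mulVec, hu, det_updateCol_smul]
  have vecMul_updateCol : v ᵥ* M.updateCol i k = q • Function.update l i c := by
    ext b
    obtain rfl | hb := eq_or_ne b i
    · simpa [vecMul, dotProduct] using hc
    · simpa [vecMul, dotProduct, updateCol_apply, hb] using congrFun hv b
  have replace_row : q ∣ v j * (M.updateCol i k).det := by
    rw [← det_updateRow_vecMul, vecMul_updateCol, det_updateRow_smul]
    exact dvd_mul_right _ _
  rw [mul_assoc, replace_col, mul_left_comm, sq]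
  exact mul_dvd_mul_left q replace_row

theorem X_sub_C_sq_dvd_det_pencil [IsDomain S] {A B : Matrix n n S} {x₀ : S} {u v : n → S}
    (hu : (A + x₀ • B) *ᵥ u = 0) (hv : v ᵥ* (A + x₀ • B) = 0) (hu₀ : u ≠ 0) (hv₀ : v ≠ 0)
    (huv : v ⬝ᵥ B *ᵥ u = 0) :
    (X - C x₀) ^ 2 ∣ (A.map C + (X : S[X]) • B.map C).det := by
  obtain ⟨i, hi⟩ := Function.ne_iff.mp hu₀
  obtain ⟨j, hj⟩ := Function.ne_iff.mp hv₀
  have pairing : (C ∘ v) ⬝ᵥ (C ∘ (B *ᵥ u)) = (0 : S[X]) := by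
    rw [← RingHom.map_dotProduct, huv, map_zero]
  have not_dvd_coeff : ¬ X - C x₀ ∣ (C ∘ v) j * (C ∘ u) i := by
    rw [Function.comp_apply, Function.comp_apply, ← map_mul, dvd_iff_isRoot, IsRoot, eval_C]
    exact mul_ne_zero hj hi
  exact (prime_X_sub_C x₀).pow_dvd_of_dvd_mul_left 2 not_dvd_coeff
    (sq_dvd_mul_det_of_mulVec_of_vecMul (pencil_mulVec_C_comp hu) (C_comp_vecMul_pencil hv)
      (pairing ▸ dvd_zero _) i j)

theorem X_sub_C_sq_dvd_det_pencil_of_posSemidef {A B : Matrix n n 𝕜} {x₀ : 𝕜} {u : n → 𝕜}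
    (h : (A + x₀ • B).PosSemidef) (hu : u ≠ 0) (hA : star u ⬝ᵥ A *ᵥ u ≤ 0)
    (hB : star u ⬝ᵥ B *ᵥ u = 0) :
    (X - C x₀) ^ 2 ∣ (A.map C + (X : 𝕜[X]) • B.map C).det := by
  have right_kernel : (A + x₀ • B) *ᵥ u = 0 := by
    refine (h.dotProduct_mulVec_zero_iff u).mp (le_antisymm ?_ (h.dotProduct_mulVec_nonneg u))
    rwa [add_mulVec, smul_mulVec, dotProduct_add, dotProduct_smul, hB, smul_zero, add_zero]
  have left_kernel : star u ᵥ* (A + x₀ • B) = 0 := by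
    rw [← h.isHermitian.eq, ← star_mulVec, right_kernel, star_zero]
  exact X_sub_C_sq_dvd_det_pencil right_kernel left_kernel hu (star_ne_zero.mpr hu) hB

theorem det_pencil_ne_zero {A B : Matrix n n S} (hB : B.det ≠ 0) :
    (A.map C + (X : S[X]) • B.map C).det ≠ 0 := by
  intro h
  apply hB
  rw [← coeff_det_X_add_C_card B A, add_comm, h, coeff_zero]

end DoubleRoot

theorem disc_eq_zero_of_sq_dvd {p : ℂ[X]} (hp : p ≠ 0) {z : ℂ} (h : (X - C z) ^ 2 ∣ p) :
    disc p = 0 := by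
  have two_le_count : 2 ≤ p.roots.toList.count z := by
    rw [← Multiset.coe_count, Multiset.coe_toList, count_roots]
    exact (le_rootMultiplicity_iff hp).mpr h
  have not_nodup : ¬ p.roots.toList.Nodup := fun hnodup =>
    (List.nodup_iff_count_le_one.mp hnodup z).not_gt two_le_count
  rw [List.Nodup, List.pairwise_iff_get] at not_nodup
  push Not at not_nodup
  obtain ⟨i, j, hij, heq⟩ := not_nodup
  rw [disc, Finset.prod_eq_zero (i := (i, j)) (by simpa using hij)
    (by rw [heq, sub_self, zero_pow two_ne_zero]), mul_zero]

section Finsler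

section CommRing

variable {S V : Type*} [CommRing S] [AddCommGroup V] [Module S V]

theorem quadraticForm_map_add_smul (Q : QuadraticForm S V) (v w : V) (s : S) :
    Q (v + s • w) = Q v + s * QuadraticMap.polar Q v w + s * s * Q w := by
  rw [QuadraticMap.map_add Q, QuadraticMap.map_smul, QuadraticMap.polar_smul_right, smul_eq_mul,
    smul_eq_mul]
  ring

theorem mul_map_add_smul_sub_mul_map_add_smul (Q : QuadraticForm S V) (v w : V) (s t : S) :
    s * Q (v + t • w) - t * Q (v + s • w) = (s - t) * (Q v - s * t * Q w) := by
  rw [quadraticForm_map_add_smul, quadraticForm_map_add_smul]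
  ring

end CommRing

variable {V : Type*} [AddCommGroup V] [Module ℝ V] {Q₁ Q₂ : QuadraticForm ℝ V} {v w : V}

theorem exists_pos_map_add_smul_eq_zero {Q : QuadraticForm ℝ V} (hv : 0 < Q v) (hw : Q w < 0) :
    ∃ s > (0 : ℝ), Q (v + s • w) = 0 := by
  simp only [quadraticForm_map_add_smul]
  set β := QuadraticMap.polar Q v w
  have discrim_nonneg : 0 ≤ discrim (Q w) β (Q v) := by
    rw [discrim]
    nlinarith [sq_nonneg β, mul_pos hv (neg_pos.mpr hw)]
  obtain ⟨s, hs⟩ := exists_quadratic_eq_zero hw.ne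
    ⟨_, (Real.mul_self_sqrt discrim_nonneg).symm⟩
  have hs₀ : s ≠ 0 := by
    rintro rfl
    simp [hv.ne'] at hs
  obtain hneg | hpos := hs₀.lt_or_gt
  · -- The product of the two roots is `Q v / Q w < 0`.
    refine ⟨Q v / (Q w * s), div_pos hv (mul_pos_of_neg_of_neg hw hneg), ?_⟩
    have hw₀ := hw.ne
    field_simp
    linear_combination Q v * hs
  · exact ⟨s, hpos, by linear_combination hs⟩

/-- The line `v + ℝ w` meets the cone `Q₂ = 0` on both sides of `v`; a positive combination of the
values of `Q₁` at the two points eliminates the polar term. -/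
theorem mul_map_le_mul_map_of_nonneg_on_zeros (h : ∀ z, Q₂ z = 0 → 0 ≤ Q₁ z) (hv : 0 < Q₂ v)
    (hw : Q₂ w < 0) : Q₁ v * Q₂ w ≤ Q₁ w * Q₂ v := by
  obtain ⟨s, hs, hs₂⟩ := exists_pos_map_add_smul_eq_zero hv hw
  obtain ⟨t, ht, ht₂⟩ : ∃ t < (0 : ℝ), Q₂ (v + t • w) = 0 := by
    obtain ⟨r, hr, hr₂⟩ := exists_pos_map_add_smul_eq_zero hv (w := -w) (by simpa using hw)
    exact ⟨-r, neg_neg_of_pos hr, by rwa [neg_smul, ← smul_neg]⟩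
  have hst : 0 < s - t := sub_pos.mpr (ht.trans hs)
  have root_product : Q₂ v = s * t * Q₂ w := by
    have := mul_map_add_smul_sub_mul_map_add_smul Q₂ v w s t
    rw [hs₂, ht₂, mul_zero, mul_zero, sub_zero, eq_comm, mul_eq_zero] at this
    exact sub_eq_zero.mp (this.resolve_left hst.ne')
  have nonneg : 0 ≤ Q₁ v - s * t * Q₁ w := by
    refine nonneg_of_mul_nonneg_right (a := s - t) ?_ hst
    rw [← mul_map_add_smul_sub_mul_map_add_smul]
    exact sub_nonneg.mpr ((mul_nonpos_of_nonpos_of_nonneg ht.le (h _ hs₂)).trans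
      (mul_nonneg hs.le (h _ ht₂)))
  rw [root_product]
  linarith [mul_nonpos_of_nonneg_of_nonpos nonneg hw.le]

theorem exists_forall_add_mul_nonneg (h : ∀ z, Q₂ z = 0 → 0 ≤ Q₁ z) (hv : 0 < Q₂ v)
    (hw : Q₂ w < 0) : ∃ t : ℝ, ∀ z, 0 ≤ Q₁ z + t * Q₂ z := by
  obtain ⟨t, lower, upper⟩ := exists_between_of_forall_le
    (s := {t | ∃ z, 0 < Q₂ z ∧ t = -Q₁ z / Q₂ z}) (t := {t | ∃ z, Q₂ z < 0 ∧ t = -Q₁ z / Q₂ z})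
    ⟨_, v, hv, rfl⟩ ⟨_, w, hw, rfl⟩ (by
      rintro _ ⟨y, hy, rfl⟩ _ ⟨z, hz, rfl⟩
      rw [div_le_iff₀ hy, div_mul_eq_mul_div, le_div_iff_of_neg hz]
      linarith [mul_map_le_mul_map_of_nonneg_on_zeros h hy hz])
  refine ⟨t, fun z => ?_⟩
  obtain hz | hz | hz := lt_trichotomy (Q₂ z) 0
  · have := (le_div_iff_of_neg hz).mp (upper ⟨z, hz, rfl⟩)
    linarith
  · simpa [hz] using h z hz
  · have := (div_le_iff₀ hz).mp (lower ⟨z, hz, rfl⟩)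
    linarith

theorem exists_posSemidef_add_smul_of_nonneg_on_isotropic {n : Type*} [Fintype n]
    {A B : Matrix n n ℝ} (hA : A.IsSymm) (hB : B.IsSymm)
    (h : ∀ z, z ⬝ᵥ B *ᵥ z = 0 → 0 ≤ z ⬝ᵥ A *ᵥ z) {v w : n → ℝ} (hv : 0 < v ⬝ᵥ B *ᵥ v)
    (hw : w ⬝ᵥ B *ᵥ w < 0) : ∃ t : ℝ, (A + t • B).PosSemidef := by
  classical
  have toQuadraticForm'_apply (M : Matrix n n ℝ) (z : n → ℝ) :
      M.toQuadraticForm' z = z ⬝ᵥ M *ᵥ z := by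
    simp [toQuadraticForm', toLinearMap₂'_apply']
  simp only [← toQuadraticForm'_apply] at h hv hw
  obtain ⟨t, ht⟩ := exists_forall_add_mul_nonneg h hv hw
  refine ⟨t, .of_dotProduct_mulVec_nonneg (by simp [IsHermitian, hA.eq, hB.eq]) fun z => ?_⟩
  simpa [add_mulVec, smul_mulVec, toQuadraticForm'_apply] using ht z

end Finsler

theorem dotProduct_hodgeStar_mulVec (s : Fin 6 → ℝ) :
    s ⬝ᵥ hodgeStar *ᵥ s = 2 * (s 0 * s 5 - s 1 * s 4 + s 2 * s 3) := by
  simp [hodgeStar, dotProduct, mulVec, Fin.sum_univ_succ]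
  ring

theorem hodgeStar_isSymm : hodgeStar.IsSymm := by
  ext i j
  fin_cases i <;> fin_cases j <;> rfl

theorem hodgeStar_mul_self : hodgeStar * hodgeStar = 1 := by
  ext i j
  fin_cases i <;> fin_cases j <;> simp [hodgeStar, mul_apply, Fin.sum_univ_succ]

/-- The bivector with Plücker coordinates `s` is decomposable, i.e. of the form `X ∧ Y`; zero is
included. -/
def IsDecomposable (s : Fin 6 → ℝ) : Prop :=
  ∃ X Y, wedge X Y = s

/-- The skew-symmetric matrix of the bivector with Plücker coordinates `s`; for `s = X ∧ Y` it is
`X Yᵀ - Y Xᵀ`, whose rows span the same plane as `X` and `Y`. -/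
def skewMatrix (s : Fin 6 → ℝ) : Matrix (Fin 4) (Fin 4) ℝ :=
  !![0, s 0, s 1, s 2; -s 0, 0, s 3, s 4; -s 1, -s 3, 0, s 5; -s 2, -s 4, -s 5, 0]

theorem wedge_skewMatrix_rows {s : Fin 6 → ℝ} (h : s ⬝ᵥ hodgeStar *ᵥ s = 0) (i j : Fin 4) :
    wedge (skewMatrix s i) (skewMatrix s j) = skewMatrix s i j • s := by
  rw [dotProduct_hodgeStar_mulVec] at h
  ext k
  fin_cases i <;> fin_cases j <;> fin_cases k <;> simp [wedge, skewMatrix] <;> grind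

theorem exists_skewMatrix_ne_zero {s : Fin 6 → ℝ} (hs : s ≠ 0) : ∃ i j, skewMatrix s i j ≠ 0 := by
  obtain ⟨k, hk⟩ := Function.ne_iff.mp hs
  fin_cases k
  exacts [⟨0, 1, hk⟩, ⟨0, 2, hk⟩, ⟨0, 3, hk⟩, ⟨1, 2, hk⟩, ⟨1, 3, hk⟩, ⟨2, 3, hk⟩]

theorem wedge_smul_left (c : ℝ) (X Y : Fin 4 → ℝ) : wedge (c • X) Y = c • wedge X Y := by
  ext i
  fin_cases i <;> simp [wedge] <;> ring

theorem IsDecomposable.smul {s : Fin 6 → ℝ} (hs : IsDecomposable s) (c : ℝ) :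
    IsDecomposable (c • s) := by
  obtain ⟨X, Y, rfl⟩ := hs
  exact ⟨c • X, Y, wedge_smul_left c X Y⟩

theorem isDecomposable_iff_isotropic {s : Fin 6 → ℝ} :
    IsDecomposable s ↔ s ⬝ᵥ hodgeStar *ᵥ s = 0 := by
  refine ⟨?_, fun h => ?_⟩
  · rintro ⟨X, Y, rfl⟩
    rw [dotProduct_hodgeStar_mulVec]
    simp [wedge]
    ring
  · obtain rfl | hs := eq_or_ne s 0
    · exact ⟨0, 0, by simpa using wedge_smul_left 0 0 0⟩
    obtain ⟨i, j, hij⟩ := exists_skewMatrix_ne_zero hs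
    exact ⟨(skewMatrix s i j)⁻¹ • skewMatrix s i, skewMatrix s j, by
      rw [wedge_smul_left, wedge_skewMatrix_rows h, inv_smul_smul₀ hij]⟩

theorem isCompact_unit_isDecomposable :
    IsCompact {s : Fin 6 → ℝ | s ⬝ᵥ s = 1 ∧ IsDecomposable s} := by
  simp only [isDecomposable_iff_isotropic]
  refine Metric.isCompact_of_isClosed_isBounded ?_ ?_
  · exact (isClosed_eq (by fun_prop) continuous_const).inter
      (isClosed_eq (by fun_prop) continuous_const)
  · refine (Metric.isBounded_closedBall (x := (0 : Fin 6 → ℝ)) (r := 1)).subset ?_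
    rintro s ⟨hs, -⟩
    rw [mem_closedBall_zero_iff, pi_norm_le_iff_of_nonneg zero_le_one]
    intro i
    rw [Real.norm_eq_abs, abs_le_one_iff_mul_self_le_one, ← hs]
    exact Finset.single_le_sum (f := fun i => s i * s i) (fun i _ => mul_self_nonneg _)
      (Finset.mem_univ i)

theorem secPos_iff {R : Matrix (Fin 6) (Fin 6) ℝ} :
    SecPos R ↔ ∀ s ∈ {s | s ⬝ᵥ s = 1 ∧ IsDecomposable s}, 0 < s ⬝ᵥ R *ᵥ s := by
  simp only [SecPos, dotProduct_comm (R *ᵥ _)]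
  constructor
  · rintro h _ ⟨hs, X, Y, rfl⟩
    exact h X Y hs
  · exact fun h X Y hXY => h _ ⟨hXY, X, Y, rfl⟩

theorem secNonneg_iff {R : Matrix (Fin 6) (Fin 6) ℝ} :
    SecNonneg R ↔ ∀ s, IsDecomposable s → 0 ≤ s ⬝ᵥ R *ᵥ s := by
  simp only [SecNonneg, dotProduct_comm (R *ᵥ _)]
  refine ⟨fun h s hs => ?_, fun h X Y _ => h _ ⟨X, Y, rfl⟩⟩
  obtain rfl | hs₀ := eq_or_ne s 0
  · simp
  have hpos : 0 < s ⬝ᵥ s := (dotProduct_self_star_nonneg s).lt_of_ne'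
    (dotProduct_self_eq_zero.not.mpr hs₀)
  set c := (√(s ⬝ᵥ s))⁻¹ with hc
  have hcc : c * c = (s ⬝ᵥ s)⁻¹ := by rw [hc, ← mul_inv, Real.mul_self_sqrt hpos.le]
  obtain ⟨X, Y, hXY⟩ := hs.smul c
  have unit_nonneg := h X Y (by
    rw [hXY, smul_dotProduct, dotProduct_smul, smul_smul, hcc, smul_eq_mul,
      inv_mul_cancel₀ hpos.ne'])
  rw [hXY, mulVec_smul, smul_dotProduct, dotProduct_smul, smul_smul, hcc, smul_eq_mul]
    at unit_nonneg
  exact nonneg_of_mul_nonneg_right unit_nonneg (inv_pos.mpr hpos)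

theorem isClosed_setOf_secNonneg : IsClosed {R | SecNonneg R} := by
  simp only [secNonneg_iff, Set.ofPred_forall]
  exact isClosed_iInter fun s => isClosed_iInter fun _ => isClosed_le continuous_const (by fun_prop)

theorem isOpen_setOf_secPos : IsOpen {R | SecPos R} := by
  simp only [secPos_iff]
  refine isOpen_iff_eventually.mpr fun R hR =>
    isCompact_unit_isDecomposable.eventually_forall_of_forall_eventually fun s hs => ?_
  have quad_continuous :
      Continuous fun q : Matrix (Fin 6) (Fin 6) ℝ × (Fin 6 → ℝ) => q.2 ⬝ᵥ q.1 *ᵥ q.2 := by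
    fun_prop
  exact quad_continuous.continuousAt.eventually (lt_mem_nhds (hR s hs))

theorem frontier_setOf_secNonneg_subset :
    frontier {R | SecNonneg R} ⊆ {R | SecNonneg R ∧ ¬ SecPos R} := by
  rw [isClosed_setOf_secNonneg.frontier_eq]
  refine Set.sdiff_subset_sdiff_right (interior_maximal ?_ isOpen_setOf_secPos)
  exact fun R hR X Y hXY => (hR X Y hXY).le

theorem SecNonneg.exists_posSemidef_add_smul {R : Matrix (Fin 6) (Fin 6) ℝ} (h : SecNonneg R)
    (hR : R.IsSymm) : ∃ x : ℝ, (R + x • hodgeStar).PosSemidef :=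
  exists_posSemidef_add_smul_of_nonneg_on_isotropic hR hodgeStar_isSymm
    (fun s hs => secNonneg_iff.mp h s (isDecomposable_iff_isotropic.mpr hs))
    (v := ![1, 0, 0, 0, 0, 1]) (w := ![1, 0, 0, 0, 0, -1])
    (by rw [dotProduct_hodgeStar_mulVec]; simp) (by rw [dotProduct_hodgeStar_mulVec]; simp)

theorem X_sub_C_sq_dvd_detPencil {R : Matrix (Fin 6) (Fin 6) ℝ} {x₀ : ℝ} (h : ¬ SecPos R)
    (hx₀ : (R + x₀ • hodgeStar).PosSemidef) : (X - C x₀) ^ 2 ∣ detPencil R := by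
  rw [secPos_iff] at h
  push Not at h
  obtain ⟨s, ⟨hs_unit, hs⟩, hRs⟩ := h
  have hs₀ : s ≠ 0 := by rintro rfl; simp at hs_unit
  exact X_sub_C_sq_dvd_det_pencil_of_posSemidef hx₀ hs₀ hRs (isDecomposable_iff_isotropic.mp hs)

theorem detPencil_ne_zero (R : Matrix (Fin 6) (Fin 6) ℝ) : detPencil R ≠ 0 :=
  det_pencil_ne_zero (det_ne_zero_of_left_inverse hodgeStar_mul_self)

theorem boundary_root_multiplicity_general (R : Matrix (Fin 6) (Fin 6) ℝ) (hnpos : ¬ SecPos R)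
    (x₀ : ℝ) (hx₀ : (R + x₀ • hodgeStar).PosSemidef) :
    (X - C x₀) ^ 2 ∣ detPencil R ∧
    ∀ R' : Matrix (Fin 6) (Fin 6) ℝ, R'.IsSymm → R' ∈ frontier {M | SecNonneg M} →
      disc ((detPencil R').map (algebraMap ℝ ℂ)) = 0 := by
  refine ⟨X_sub_C_sq_dvd_detPencil hnpos hx₀, fun R' hR' hfrontier => ?_⟩
  obtain ⟨hsec, hnpos'⟩ := frontier_setOf_secNonneg_subset hfrontier
  obtain ⟨x, hx⟩ := hsec.exists_posSemidef_add_smul hR'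
  have hdvd : (X - C (x : ℂ)) ^ 2 ∣ (detPencil R').map (algebraMap ℝ ℂ) := by
    simpa using map_dvd (algebraMap ℝ ℂ) (X_sub_C_sq_dvd_detPencil hnpos' hx)
  exact disc_eq_zero_of_sq_dvd (map_ne_zero (detPencil_ne_zero R')) hdvd

/-- If `R ∈ Sym²_b(∧²ℝ⁴)` has `sec_R ≥ 0` but not `sec_R > 0` and `R + x₀ * ⪰ 0`,
then `x₀` is a root of multiplicity at least `2` of `x ↦ det(R + x *)`.  In particular,
the discriminant `disc_x det(R + x *)` vanishes on the topological boundary of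
`{R ∈ Sym²_b(∧²ℝ⁴) : sec_R ≥ 0}`. -/
theorem boundary_root_multiplicity (R : Matrix (Fin 6) (Fin 6) ℝ)
    (hsymm : R.IsSymm) (hb : Bianchi R)
    (hsec : SecNonneg R) (hnpos : ¬ SecPos R)
    (x₀ : ℝ) (hx₀ : (R + x₀ • hodgeStar).PosSemidef) :
    (Polynomial.X - Polynomial.C x₀) ^ 2 ∣ detPencil R ∧
    ∀ R' : CurvOp, R' ∈ frontier {M : CurvOp | SecNonneg M.1} →
      disc ((detPencil R'.1).map (algebraMap ℝ ℂ)) = 0 :=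
  (boundary_root_multiplicity_general R hnpos x₀ hx₀).imp_right fun h R' hR' =>
    h R'.1 R'.2.1 (continuous_subtype_val.frontier_preimage_subset {M | SecNonneg M} hR')
end

section
/- For every complex symmetric n×n matrix A there exist eigenvalues λ₁,…,λ_ℓ ∈ ℂ of A and positive integers k₁,…,k_ℓ with k₁+…+k_ℓ = n such that the O(n,ℂ)-orbit of A (under A ↦ SASᵗ) contains the block diagonal matrix with blocks M_{kᵢ}(λᵢ), where M_k(λ) = λ·Id_k + R_k Λ_k R_kᵗ; moreover the characteristic polynomial of A equals ∏ᵢ (λᵢ − t)^{kᵢ}, and det(M_k(λ) − t·Id_k) = (λ − t)^k. -/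
/-!
The standard form `x ⬝ᵥ y` is a nondegenerate symmetric form `B` for which a symmetric matrix `A` is
self-adjoint, so the task is to decompose the space orthogonally into Jordan chains on which `B` and
`A` have the Gram matrices `Δ` and `μ Δ + Λ`.

On a generalized eigenspace, which is nondegenerate by Fitting's lemma, `N = A - μ` is nilpotent. If
`N ^ (k + 1) = 0 ≠ N ^ k`, the symmetric form `B (N ^ k x) y` is nonzero, hence `B (N ^ k v) v ≠ 0`
for some `v`, and `v` can be rescaled to make this value `1`. Adding multiples of `N v, N² v, …` to
`v` then successively makes `B (N ^ j v) v = 0` for `j = k - 1, k - 2, …, 0`. The chain so obtained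
has Gram matrix `Δ` in reversed order, so its span is nondegenerate, and induction applies to its
orthogonal complement. Finally, `R_k` turns the chain basis with Gram matrix `Δ_k` into an
orthonormal one.
-/

open Matrix Polynomial

/-- The `k × k` antidiagonal matrix `Δ_k`. -/
noncomputable def Delta (k : ℕ) : Matrix (Fin k) (Fin k) ℂ :=
  Matrix.of fun i j => if (i : ℕ) + (j : ℕ) = k - 1 then 1 else 0

/-- The symmetric `k × k` matrix `Λ_k` with `1`'s on the shifted antidiagonal
(positions `i + j = k`, zero-indexed) and zeros elsewhere; `Λ₁ = 0`. -/
noncomputable def Lam (k : ℕ) : Matrix (Fin k) (Fin k) ℂ :=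
  Matrix.of fun i j => if (i : ℕ) + (j : ℕ) = k then 1 else 0

/-- The canonical block `M_k(λ) = λ·Id + R_k Λ_k R_kᵗ`. -/
noncomputable def Mblock {k : ℕ} (Rk : Matrix (Fin k) (Fin k) ℂ) (μ : ℂ) :
    Matrix (Fin k) (Fin k) ℂ := μ • (1 : Matrix (Fin k) (Fin k) ℂ) + Rk * Lam k * Rkᵀ

section SelfAdjoint

variable {R M : Type*} [CommRing R] [AddCommGroup M] [Module R M]
  {B : LinearMap.BilinForm R M} {f : Module.End R M}

theorem isSelfAdjoint_pow (hf : B.IsSelfAdjoint f) (n : ℕ) :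
    B.IsSelfAdjoint (f ^ n : Module.End R M) := by
  induction n with
  | zero => exact LinearMap.isAdjointPair_one
  | succ n ih =>
    have h := ih.mul hf
    rwa [← pow_succ, ← pow_succ'] at h

theorem isSelfAdjoint_sub_smul_one (hf : B.IsSelfAdjoint f) (μ : R) :
    B.IsSelfAdjoint (f - μ • 1 : Module.End R M) := fun x y => by simp [hf x y]

theorem isSelfAdjoint_restrict (hf : B.IsSelfAdjoint f) {p : Submodule R M}
    (hp : ∀ x ∈ p, f x ∈ p) : (B.restrict p).IsSelfAdjoint (f.restrict hp) :=
  fun x y => hf x y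

theorem map_mem_orthogonal (hf : B.IsSelfAdjoint f) {p : Submodule R M}
    (hp : ∀ x ∈ p, f x ∈ p) : ∀ x ∈ B.orthogonal p, f x ∈ B.orthogonal p :=
  fun x hx y hy => (hf y x).symm.trans (hx (f y) (hp y hy))

theorem apply_pow_add_smul_pow (hf : B.IsSelfAdjoint f) (v : M) (a : R) (m j : ℕ) :
    B ((f ^ j) (v + a • (f ^ m) v)) (v + a • (f ^ m) v) =
      B ((f ^ j) v) v + 2 * a * B ((f ^ (j + m)) v) v + a ^ 2 * B ((f ^ (j + 2 * m)) v) v := by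
  have hmove (x : M) : B x ((f ^ m) v) = B ((f ^ m) x) v := (isSelfAdjoint_pow hf m x v).symm
  simp only [map_add, map_smul, LinearMap.add_apply, LinearMap.smul_apply, smul_eq_mul, hmove,
    ← Module.End.mul_apply, ← pow_add]
  ring_nf

theorem nondegenerate_restrict_of_codisjoint (hB : B.Nondegenerate) (hs : B.IsSymm)
    {p q : Submodule R M} (hpq : Codisjoint p q) (h : ∀ x ∈ p, ∀ y ∈ q, B x y = 0) :
    (B.restrict p).Nondegenerate := by
  refine (LinearMap.IsRefl.nondegenerate_iff_separatingLeft (hs.restrict p).isRefl).2 ?_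
  rw [LinearMap.separatingLeft_iff_ker_eq_bot,
    LinearMap.BilinForm.ker_restrict_eq_of_codisjoint hpq h, hB.ker_eq_bot]
  simp

end SelfAdjoint

/-- The span of the chain `v, N v, …, N ^ (k - 1) v`. -/
def chainSpan {R M : Type*} [CommRing R] [AddCommGroup M] [Module R M]
    (N : Module.End R M) (k : ℕ) (v : M) : Submodule R M :=
  Submodule.span R (Set.range fun i : Fin k => (N ^ (i : ℕ)) v)

section Intertwining

variable {R M M' : Type*} [CommRing R] [AddCommGroup M] [Module R M] [AddCommGroup M']
  [Module R M'] {g : M' →ₗ[R] M} {N : Module.End R M} {N' : Module.End R M'}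

theorem pow_apply_intertwine (hg : N ∘ₗ g = g ∘ₗ N') (n : ℕ) (v : M') :
    (N ^ n) (g v) = g ((N' ^ n) v) :=
  LinearMap.congr_fun (Module.End.commute_pow_left_of_commute hg n) v

theorem map_chainSpan (hg : N ∘ₗ g = g ∘ₗ N') (k : ℕ) (v : M') :
    (chainSpan N' k v).map g = chainSpan N k (g v) := by
  simp only [chainSpan, Submodule.map_span, ← Set.range_comp, Function.comp_def,
    pow_apply_intertwine hg]

theorem intertwine_sub_smul_one (hg : N ∘ₗ g = g ∘ₗ N') (μ : R) :
    (N - μ • 1 : Module.End R M) ∘ₗ g = g ∘ₗ (N' - μ • 1 : Module.End R M') := by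
  ext x
  simpa using LinearMap.congr_fun hg x

end Intertwining

/-- A self-dual chain of length `k`: a Jordan chain `v, N v, …, N ^ (k - 1) v` which, for `N`
self-adjoint, is its own `B`-dual basis up to reversal. By self-adjointness, the values
`B (N ^ j v) v` determine all values of `B` on the chain. -/
structure IsSelfDualChain {R M : Type*} [CommRing R] [AddCommGroup M] [Module R M]
    (B : LinearMap.BilinForm R M) (N : Module.End R M) (k : ℕ) (v : M) : Prop where
  length_pos : 0 < k
  pow_length : (N ^ k) v = 0
  apply_pow_self : ∀ j, B ((N ^ j) v) v = if j + 1 = k then 1 else 0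

namespace IsSelfDualChain

section CommRing

variable {R M : Type*} [CommRing R] [AddCommGroup M] [Module R M]
  {B : LinearMap.BilinForm R M} {N : Module.End R M} {k : ℕ} {v : M}

theorem map {M' : Type*} [AddCommGroup M'] [Module R M'] {g : M' →ₗ[R] M} {N' : Module.End R M'}
    {v : M'} (hg : N ∘ₗ g = g ∘ₗ N') (h : IsSelfDualChain (B.comp g g) N' k v) :
    IsSelfDualChain B N k (g v) where
  length_pos := h.length_pos
  pow_length := by rw [pow_apply_intertwine hg, h.pow_length, map_zero]
  apply_pow_self j := by rw [pow_apply_intertwine hg]; exact h.apply_pow_self j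

theorem apply_pow_pow (h : IsSelfDualChain B N k v) (hN : B.IsSelfAdjoint N) (i j : ℕ) :
    B ((N ^ i) v) ((N ^ j) v) = if i + j + 1 = k then 1 else 0 := by
  rw [← isSelfAdjoint_pow hN j, ← Module.End.mul_apply, ← pow_add, h.apply_pow_self, add_comm j]

theorem apply_sum_smul_pow (h : IsSelfDualChain B N k v) (hN : B.IsSelfAdjoint N)
    (c : Fin k → R) (j : Fin k) :
    B (∑ i, c i • (N ^ (i : ℕ)) v) ((N ^ (j.rev : ℕ)) v) = c j := by
  have hij (i : Fin k) : (i : ℕ) + j.rev + 1 = k ↔ i = j := by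
    rw [Fin.val_rev, Fin.ext_iff]; lia
  simp [LinearMap.sum_apply, h.apply_pow_pow hN, hij, -Fin.val_rev]

theorem linearIndependent (h : IsSelfDualChain B N k v) (hN : B.IsSelfAdjoint N) :
    LinearIndependent R fun i : Fin k => (N ^ (i : ℕ)) v :=
  Fintype.linearIndependent_iff.2 fun c hc j => by
    rw [← h.apply_sum_smul_pow hN c j, hc, map_zero, LinearMap.zero_apply]

theorem finrank_chainSpan [Nontrivial R] (h : IsSelfDualChain B N k v)
    (hN : B.IsSelfAdjoint N) : Module.finrank R (chainSpan N k v) = k := by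
  exact (finrank_span_eq_card (h.linearIndependent hN)).trans (Fintype.card_fin k)

theorem pow_apply_mem_chainSpan (h : IsSelfDualChain B N k v) (i : ℕ) :
    (N ^ i) v ∈ chainSpan N k v := by
  rcases lt_or_ge i k with hi | hi
  · exact Submodule.subset_span ⟨⟨i, hi⟩, rfl⟩
  · rw [Module.End.pow_map_zero_of_le hi h.pow_length]
    exact zero_mem _

theorem map_mem_chainSpan (h : IsSelfDualChain B N k v) :
    ∀ x ∈ chainSpan N k v, N x ∈ chainSpan N k v := by
  suffices hle : chainSpan N k v ≤ (chainSpan N k v).comap N from hle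
  refine Submodule.span_le.2 ?_
  rintro _ ⟨i, rfl⟩
  simpa [pow_succ'] using h.pow_apply_mem_chainSpan (i + 1)

theorem map_mem_chainSpan_sub_smul_one {f : Module.End R M} {μ : R}
    (h : IsSelfDualChain B (f - μ • 1) k v) :
    ∀ x ∈ chainSpan (f - μ • 1) k v, f x ∈ chainSpan (f - μ • 1) k v := fun x hx => by
  simpa using add_mem (h.map_mem_chainSpan x hx) (Submodule.smul_mem _ μ hx)

theorem disjoint_orthogonal_chainSpan (h : IsSelfDualChain B N k v) (hN : B.IsSelfAdjoint N)
    (hs : B.IsSymm) : Disjoint (chainSpan N k v) (B.orthogonal (chainSpan N k v)) := by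
  rw [Submodule.disjoint_def]
  intro x hx hxo
  obtain ⟨c, rfl⟩ := (Submodule.mem_span_range_iff_exists_fun R).1 hx
  refine Finset.sum_eq_zero fun j _ => ?_
  rw [← h.apply_sum_smul_pow hN c j, hs.isRefl _ _ (hxo _ (h.pow_apply_mem_chainSpan _)),
    zero_smul]

end CommRing

section Field

variable {K V : Type*} [Field K] [AddCommGroup V] [Module K V] [FiniteDimensional K V]
  {B : LinearMap.BilinForm K V} {N : Module.End K V} {k : ℕ} {v : V}

theorem isCompl_orthogonal_chainSpan (h : IsSelfDualChain B N k v) (hN : B.IsSelfAdjoint N)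
    (hs : B.IsSymm) : IsCompl (chainSpan N k v) (B.orthogonal (chainSpan N k v)) :=
  (LinearMap.BilinForm.isCompl_orthogonal_iff_disjoint hs.isRefl).2
    (h.disjoint_orthogonal_chainSpan hN hs)

theorem finrank_orthogonal_chainSpan (h : IsSelfDualChain B N k v) (hN : B.IsSelfAdjoint N)
    (hs : B.IsSymm) :
    k + Module.finrank K (B.orthogonal (chainSpan N k v)) = Module.finrank K V := by
  rw [← Submodule.finrank_add_eq_of_isCompl (h.isCompl_orthogonal_chainSpan hN hs),
    h.finrank_chainSpan hN]

end Field

end IsSelfDualChain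

section NilpotentSelfAdjoint

variable {R M : Type*} [CommRing R] [AddCommGroup M] [Module R M]
  {B : LinearMap.BilinForm R M} {N : Module.End R M}

theorem exists_pow_apply_self_ne_zero [Invertible (2 : R)] [Nontrivial M] (hB : B.Nondegenerate)
    (hs : B.IsSymm) (hN : B.IsSelfAdjoint N) (hnil : IsNilpotent N) :
    ∃ (k : ℕ) (x : M), (N ^ (k + 1)) x = 0 ∧ B ((N ^ k) x) x ≠ 0 := by
  obtain ⟨k, hk⟩ := Nat.exists_eq_succ_of_ne_zero (pos_nilpotencyClass_iff.2 hnil).ne'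
  have hpow : N ^ k ≠ 0 := by simpa [hk] using pow_pred_nilpotencyClass hnil
  have hne : B.compLeft (N ^ k) ≠ 0 := fun h => hpow <| LinearMap.ext fun x =>
    hB.1 _ fun y => by simpa using LinearMap.congr_fun₂ h x y
  have hsymm : (B.compLeft (N ^ k)).IsSymm :=
    ⟨fun x y => (isSelfAdjoint_pow hN k x y).trans (hs.eq x ((N ^ k) y))⟩
  obtain ⟨x, hx⟩ := LinearMap.BilinForm.exists_bilinForm_self_ne_zero hne
    (LinearMap.BilinForm.isSymm_iff.1 hsymm)
  exact ⟨k, x, by rw [← Nat.succ_eq_add_one, ← hk, pow_nilpotencyClass hnil]; rfl, hx⟩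

theorem exists_isSelfDualChain_of_apply_pow_eq_one [Invertible (2 : R)] (hN : B.IsSelfAdjoint N)
    {k : ℕ} {x : M} (hx : (N ^ (k + 1)) x = 0) (hkx : B ((N ^ k) x) x = 1) :
    ∃ v, IsSelfDualChain B N (k + 1) v := by
  have hvanish {v : M} (hv : (N ^ (k + 1)) v = 0) {j : ℕ} (hj : k < j) : (N ^ j) v = 0 :=
    Module.End.pow_map_zero_of_le hj hv
  suffices H : ∀ m : ℕ, ∃ v, (N ^ (k + 1)) v = 0 ∧
      ∀ j, k ≤ j + m → B ((N ^ j) v) v = if j = k then 1 else 0 by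
    obtain ⟨v, hv, hvj⟩ := H k
    exact ⟨v, k.succ_pos, hv, fun j => by simpa using hvj j (by lia)⟩
  intro m
  induction m with
  | zero =>
    refine ⟨x, hx, fun j hj => ?_⟩
    rw [add_zero] at hj
    rcases hj.eq_or_lt with rfl | hj
    · simpa using hkx
    · simp [hvanish hx hj, hj.ne']
  | succ m ih =>
    obtain ⟨v, hv, hvj⟩ := ih
    refine ⟨v + (-(⅟2 * B ((N ^ (k - (m + 1))) v) v)) • (N ^ (m + 1)) v, ?_, fun j hj => ?_⟩
    · rw [map_add, map_smul, ← Module.End.mul_apply, ← pow_add, hv,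
        hvanish hv (j := k + 1 + (m + 1)) (by lia), smul_zero, add_zero]
    · rw [apply_pow_add_smul_pow hN, hvj (j + (m + 1)) (by lia),
        hvanish hv (j := j + 2 * (m + 1)) (by lia)]
      rcases hj.eq_or_lt with rfl | hj
      · simp
      · rw [hvj j (by lia), if_neg (by lia : j + (m + 1) ≠ k)]
        simp

end NilpotentSelfAdjoint

section Field

variable {K V : Type*} [Field K] [AddCommGroup V] [Module K V]
  {B : LinearMap.BilinForm K V} {f N : Module.End K V}

theorem exists_pow_apply_self_eq_one [IsAlgClosed K] {k : ℕ} {x : V}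
    (hx : (N ^ (k + 1)) x = 0) (hkx : B ((N ^ k) x) x ≠ 0) :
    ∃ v, (N ^ (k + 1)) v = 0 ∧ B ((N ^ k) v) v = 1 := by
  obtain ⟨c, hc⟩ := IsAlgClosed.exists_pow_nat_eq (B ((N ^ k) x) x) two_pos
  have hc0 : c ≠ 0 := by rintro rfl; simp [← hc] at hkx
  refine ⟨c⁻¹ • x, by simp [hx], ?_⟩
  simp only [map_smul, LinearMap.smul_apply, smul_eq_mul, ← hc]
  field_simp

theorem nondegenerate_restrict_maxGenEigenspace [FiniteDimensional K V] (hB : B.Nondegenerate)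
    (hs : B.IsSymm) (hf : B.IsSelfAdjoint f) (μ : K) :
    (B.restrict (f.maxGenEigenspace μ)).Nondegenerate := by
  set N := f - μ • 1
  have hfitting : Codisjoint (f.maxGenEigenspace μ) (⨅ n, LinearMap.range (N ^ n)) := by
    have := (LinearMap.isCompl_iSup_ker_pow_iInf_range_pow N).codisjoint
    simpa only [← Module.End.iSup_genEigenspace_eq, Module.End.genEigenspace_nat] using this
  refine nondegenerate_restrict_of_codisjoint hB hs hfitting fun x hx y hy => ?_
  obtain ⟨n, hn⟩ := (f.mem_maxGenEigenspace μ x).1 hx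
  obtain ⟨z, rfl⟩ := (Submodule.mem_iInf _).1 hy n
  rw [← isSelfAdjoint_pow (isSelfAdjoint_sub_smul_one hf μ) n, hn, map_zero, LinearMap.zero_apply]

theorem exists_isSelfDualChain [IsAlgClosed K] [Invertible (2 : K)] [FiniteDimensional K V]
    [Nontrivial V] (hB : B.Nondegenerate) (hs : B.IsSymm) (hf : B.IsSelfAdjoint f) :
    ∃ (μ : K) (k : ℕ) (v : V), IsSelfDualChain B (f - μ • 1) k v := by
  obtain ⟨μ, hμ⟩ := Module.End.exists_eigenvalue f
  have hmaps : ∀ x ∈ f.maxGenEigenspace μ, (f - μ • 1) x ∈ f.maxGenEigenspace μ :=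
    f.mapsTo_maxGenEigenspace_of_comm (Algebra.mul_sub_algebraMap_commutes f μ) μ
  have : Nontrivial (f.maxGenEigenspace μ) :=
    Submodule.nontrivial_iff_ne_bot.2
      (ne_bot_of_le_ne_bot hμ Module.End.eigenspace_le_maxGenEigenspace)
  have hN := isSelfAdjoint_restrict (isSelfAdjoint_sub_smul_one hf μ) hmaps
  obtain ⟨k, x, hx, hkx⟩ := exists_pow_apply_self_ne_zero
    (nondegenerate_restrict_maxGenEigenspace hB hs hf μ) (hs.restrict _) hN
    (f.isNilpotent_restrict_maxGenEigenspace_sub_algebraMap μ)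
  obtain ⟨y, hy, hky⟩ := exists_pow_apply_self_eq_one hx hkx
  obtain ⟨v, hv⟩ := exists_isSelfDualChain_of_apply_pow_eq_one hN hy hky
  exact ⟨μ, k + 1, v, hv.map (g := Submodule.subtype _) rfl⟩

end Field

/-- Mutually `B`-orthogonal self-dual chains of `f - μ i`, of lengths `k i` and starting vectors
`v i`. -/
structure IsOrthogonalChainFamily {R M ι : Type*} [CommRing R] [AddCommGroup M] [Module R M]
    (B : LinearMap.BilinForm R M) (f : Module.End R M) (μ : ι → R) (k : ι → ℕ) (v : ι → M) :
    Prop where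
  isSelfDualChain : ∀ i, IsSelfDualChain B (f - μ i • 1) (k i) (v i)
  pairwise_orthogonal : Pairwise fun i j => ∀ x ∈ chainSpan (f - μ i • 1) (k i) (v i),
    ∀ y ∈ chainSpan (f - μ j • 1) (k j) (v j), B x y = 0

namespace IsOrthogonalChainFamily

variable {R M ι : Type*} [CommRing R] [AddCommGroup M] [Module R M]
  {B : LinearMap.BilinForm R M} {f : Module.End R M}

theorem map {M' : Type*} [AddCommGroup M'] [Module R M'] {g : M' →ₗ[R] M} {f' : Module.End R M'}
    {μ : ι → R} {k : ι → ℕ} {v : ι → M'} (hg : f ∘ₗ g = g ∘ₗ f')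
    (h : IsOrthogonalChainFamily (B.comp g g) f' μ k v) :
    IsOrthogonalChainFamily B f μ k (g ∘ v) := by
  refine ⟨fun i => (h.isSelfDualChain i).map (intertwine_sub_smul_one hg _), fun i j hij => ?_⟩
  simp only [Function.comp_apply, ← map_chainSpan (intertwine_sub_smul_one hg _)]
  rintro _ ⟨x, hx, rfl⟩ _ ⟨y, hy, rfl⟩
  exact h.pairwise_orthogonal hij x hx y hy

theorem cons {n : ℕ} {μ : Fin n → R} {k : Fin n → ℕ} {v : Fin n → M} {μ₀ : R} {k₀ : ℕ} {v₀ : M}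
    (hs : B.IsSymm) (h₀ : IsSelfDualChain B (f - μ₀ • 1) k₀ v₀)
    (h : IsOrthogonalChainFamily B f μ k v)
    (horth : ∀ i, chainSpan (f - μ i • 1) (k i) (v i) ≤
      B.orthogonal (chainSpan (f - μ₀ • 1) k₀ v₀)) :
    IsOrthogonalChainFamily B f (Fin.cons μ₀ μ : Fin (n + 1) → R)
      (Fin.cons k₀ k : Fin (n + 1) → ℕ) (Fin.cons v₀ v : Fin (n + 1) → M) := by
  refine ⟨Fin.cases h₀ h.isSelfDualChain, ?_⟩
  refine Fin.cases (Fin.cases (absurd rfl) fun j _ x hx y hy => horth j hy x hx) fun i => ?_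
  refine Fin.cases (fun _ x hx y hy => hs.isRefl _ _ (horth i hx y hy)) fun j hij => ?_
  exact h.pairwise_orthogonal (ne_of_apply_ne Fin.succ hij)

end IsOrthogonalChainFamily

theorem exists_isOrthogonalChainFamily {K V : Type*} [Field K] [IsAlgClosed K] [Invertible (2 : K)]
    [AddCommGroup V] [Module K V] [FiniteDimensional K V] {B : LinearMap.BilinForm K V}
    {f : Module.End K V} (hB : B.Nondegenerate) (hs : B.IsSymm) (hf : B.IsSelfAdjoint f) :
    ∃ (ℓ : ℕ) (μ : Fin ℓ → K) (k : Fin ℓ → ℕ) (v : Fin ℓ → V),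
      IsOrthogonalChainFamily B f μ k v ∧ ∑ i, k i = Module.finrank K V := by
  induction hd : Module.finrank K V using Nat.strong_induction_on generalizing V with
  | _ d ih =>
  subst hd
  rcases subsingleton_or_nontrivial V with _ | _
  · exact ⟨0, Fin.elim0, Fin.elim0, Fin.elim0, ⟨fun i => i.elim0, fun i => i.elim0⟩,
      by simp [Module.finrank_zero_of_subsingleton]⟩
  obtain ⟨μ₀, k₀, v₀, h₀⟩ := exists_isSelfDualChain hB hs hf
  have hN := isSelfAdjoint_sub_smul_one hf μ₀
  have hmaps := map_mem_orthogonal hf h₀.map_mem_chainSpan_sub_smul_one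
  have hdim := h₀.finrank_orthogonal_chainSpan hN hs
  set U := B.orthogonal (chainSpan (f - μ₀ • 1) k₀ v₀)
  have hnondeg : (B.restrict U).Nondegenerate :=
    nondegenerate_restrict_of_codisjoint hB hs
      (h₀.isCompl_orthogonal_chainSpan hN hs).symm.codisjoint
      fun x hx y hy => hs.isRefl _ _ (hx y hy)
  obtain ⟨ℓ, μ, k, v, h, hk⟩ := ih _ (by have := h₀.length_pos; lia) hnondeg (hs.restrict _)
    (isSelfAdjoint_restrict hf hmaps) rfl
  have hsub : f ∘ₗ U.subtype = U.subtype ∘ₗ f.restrict hmaps := rfl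
  refine ⟨ℓ + 1, Fin.cons μ₀ μ, Fin.cons k₀ k, Fin.cons v₀ (U.subtype ∘ v),
    .cons hs h₀ (h.map hsub) fun i => ?_, ?_⟩
  · exact (map_chainSpan (intertwine_sub_smul_one hsub _) _ _).ge.trans
      (Submodule.map_subtype_le _ _)
  · rw [← hdim, ← hk, Fin.sum_univ_succ]
    rfl

section Blocks

theorem Delta_mul {k : ℕ} (M : Matrix (Fin k) (Fin k) ℂ) :
    Delta k * M = M.submatrix Fin.rev id := by
  ext i j
  have hrev (l : Fin k) : (i : ℕ) + l = k - 1 ↔ l = i.rev := by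
    rw [Fin.ext_iff, Fin.val_rev]; lia
  simp [Matrix.mul_apply, Delta, hrev]

theorem Delta_mul_Delta (k : ℕ) : Delta k * Delta k = 1 := by
  rw [Delta_mul]
  ext i j
  have hrev : (i.rev : ℕ) + j = k - 1 ↔ i = j := by
    rw [Fin.ext_iff, Fin.val_rev]; lia
  simp [Delta, Matrix.one_apply, hrev, -Fin.val_rev]

theorem Mblock_eq_mul_mul_transpose {k : ℕ} {R : Matrix (Fin k) (Fin k) ℂ}
    (hR : R * Delta k * Rᵀ = 1) (μ : ℂ) :
    Mblock R μ = R * (μ • Delta k + Lam k) * Rᵀ := by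
  simp [Mblock, Matrix.mul_add, Matrix.add_mul, hR]

theorem transpose_mul_self_eq_Delta {k : ℕ} {R : Matrix (Fin k) (Fin k) ℂ}
    (hR : R * Delta k * Rᵀ = 1) : Rᵀ * R = Delta k := by
  have hinv : Delta k * Rᵀ * R = 1 := mul_eq_one_comm.1 (by rwa [← Matrix.mul_assoc])
  calc Rᵀ * R = Delta k * (Delta k * Rᵀ * R) := by
        simp only [← Matrix.mul_assoc, Delta_mul_Delta, Matrix.one_mul]
    _ = Delta k := by rw [hinv, Matrix.mul_one]

theorem Delta_mul_Lam_apply {k : ℕ} (i j : Fin k) :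
    (Delta k * Lam k) i j = if (j : ℕ) = i + 1 then 1 else 0 := by
  have hrev : (i.rev : ℕ) + j = k ↔ (j : ℕ) = i + 1 := by rw [Fin.val_rev]; lia
  simp [Delta_mul, Lam, hrev, -Fin.val_rev]

theorem charpoly_smul_one_add_Delta_mul_Lam (k : ℕ) (μ : ℂ) :
    (μ • 1 + Delta k * Lam k).charpoly = (X - C μ) ^ k := by
  rw [Matrix.charpoly_of_isUpperTriangular]
  · simp [Delta_mul_Lam_apply]
  · intro i j hij
    have hlt : (j : ℕ) < i := hij
    have hne : i ≠ j := ne_of_gt hij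
    simp [Delta_mul_Lam_apply, Matrix.one_apply_ne hne, (show (j : ℕ) ≠ i + 1 by lia)]

theorem charpoly_Mblock {k : ℕ} {R : Matrix (Fin k) (Fin k) ℂ} (hR : R * Delta k * Rᵀ = 1)
    (μ : ℂ) : (Mblock R μ).charpoly = (X - C μ) ^ k := by
  rw [Mblock_eq_mul_mul_transpose hR, Matrix.mul_assoc, Matrix.charpoly_mul_comm, Matrix.mul_assoc,
    transpose_mul_self_eq_Delta hR, Matrix.charpoly_mul_comm, Matrix.mul_add, Matrix.mul_smul,
    Delta_mul_Delta, charpoly_smul_one_add_Delta_mul_Lam]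

end Blocks

theorem charpoly_blockDiagonal' {R ι : Type*} {m : ι → Type*} [CommRing R] [Fintype ι]
    [DecidableEq ι] [∀ i, Fintype (m i)] [∀ i, DecidableEq (m i)]
    (M : ∀ i, Matrix (m i) (m i) R) :
    (blockDiagonal' M).charpoly = ∏ i, (M i).charpoly := by
  let o : LinearOrder ι := .lift' (Fintype.equivFin ι) (Fintype.equivFin ι).injective
  obtain rfl : ‹DecidableEq ι› = o.toDecidableEq := Subsingleton.elim _ _
  have hblock (i : ι) :
      ((blockDiagonal' M).toSquareBlock Sigma.fst i).charpoly = (M i).charpoly := by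
    rw [← Matrix.charpoly_reindex (Equiv.sigmaSubtype i)]
    congr 1
    ext r s
    exact Matrix.blockDiagonal'_apply_eq M i r s
  rw [(Matrix.blockTriangular_blockDiagonal' M).charpoly]
  simp only [hblock]
  refine Finset.prod_subset (Finset.subset_univ _) fun i _ hi => ?_
  have : IsEmpty (m i) :=
    ⟨fun r => hi (Finset.mem_image_of_mem Sigma.fst (Finset.mem_univ ⟨i, r⟩))⟩
  exact Matrix.charpoly_isEmpty

theorem charpoly_mul_mul_transpose {R n : Type*} [CommRing R] [Fintype n] [DecidableEq n]
    {S : Matrix n n R} (hS : Sᵀ * S = 1) (A : Matrix n n R) :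
    (S * A * Sᵀ).charpoly = A.charpoly := by
  rw [Matrix.mul_assoc, Matrix.charpoly_mul_comm, Matrix.mul_assoc, hS, Matrix.mul_one]

/-- The vectors of an orthogonal family of self-dual chains, arranged block by block. Each chain is
listed from its last vector to its first, so that `f` has Gram block `μ i • Delta (k i) + Lam (k i)`
with the ones of `Lam` below the antidiagonal. -/
def chainVector {V ι : Type*} [AddCommGroup V] [Module ℂ V] (f : Module.End ℂ V) (μ : ι → ℂ)
    (k : ι → ℕ) (v : ι → V) (p : Σ i, Fin (k i)) : V :=
  ((f - μ p.1 • 1) ^ (p.2.rev : ℕ)) (v p.1)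

section Gram

variable {V ι : Type*} [AddCommGroup V] [Module ℂ V] {B : LinearMap.BilinForm ℂ V}
  {f : Module.End ℂ V}

theorem IsSelfDualChain.apply_pow_rev_pow_rev {N : Module.End ℂ V} {k : ℕ} {v : V}
    (h : IsSelfDualChain B N k v) (hN : B.IsSelfAdjoint N) (r s : Fin k) :
    B ((N ^ (r.rev : ℕ)) v) ((N ^ (s.rev : ℕ)) v) = Delta k r s := by
  rw [h.apply_pow_pow hN]
  refine if_congr ?_ rfl rfl
  rw [Fin.val_rev, Fin.val_rev]
  lia

theorem IsSelfDualChain.apply_map_pow_rev_pow_rev {μ : ℂ} {k : ℕ} {v : V}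
    (h : IsSelfDualChain B (f - μ • 1) k v) (hf : B.IsSelfAdjoint f) (r s : Fin k) :
    B (f (((f - μ • 1) ^ (r.rev : ℕ)) v)) (((f - μ • 1) ^ (s.rev : ℕ)) v) =
      (μ • Delta k + Lam k) r s := by
  have hN := isSelfAdjoint_sub_smul_one hf μ
  have hLam : B (((f - μ • 1) ^ (r.rev + 1 : ℕ)) v) (((f - μ • 1) ^ (s.rev : ℕ)) v) =
      Lam k r s := by
    rw [h.apply_pow_pow hN]
    refine if_congr ?_ rfl rfl
    rw [Fin.val_rev, Fin.val_rev]
    lia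
  have hmap (x : V) : f x = μ • x + (f - μ • 1) x := by simp
  rw [hmap, ← Module.End.mul_apply, ← pow_succ', map_add, map_smul, LinearMap.add_apply,
    LinearMap.smul_apply, hLam, h.apply_pow_rev_pow_rev hN, Matrix.add_apply, Matrix.smul_apply]

namespace IsOrthogonalChainFamily

variable {μ : ι → ℂ} {k : ι → ℕ} {v : ι → V}

theorem chainVector_mem (h : IsOrthogonalChainFamily B f μ k v) (p : Σ i, Fin (k i)) :
    chainVector f μ k v p ∈ chainSpan (f - μ p.1 • 1) (k p.1) (v p.1) :=
  (h.isSelfDualChain p.1).pow_apply_mem_chainSpan _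

theorem apply_chainVector [DecidableEq ι] (h : IsOrthogonalChainFamily B f μ k v)
    (hf : B.IsSelfAdjoint f) (p q : Σ i, Fin (k i)) :
    B (chainVector f μ k v p) (chainVector f μ k v q) =
      blockDiagonal' (fun i => Delta (k i)) p q := by
  by_cases hpq : p.1 = q.1
  · obtain ⟨i, r⟩ := p
    obtain ⟨_, s⟩ := q
    obtain rfl : i = _ := hpq
    rw [Matrix.blockDiagonal'_apply_eq]
    exact (h.isSelfDualChain i).apply_pow_rev_pow_rev (isSelfAdjoint_sub_smul_one hf _) r s
  · rw [Matrix.blockDiagonal'_apply_ne _ _ _ hpq]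
    exact h.pairwise_orthogonal hpq _ (h.chainVector_mem p) _ (h.chainVector_mem q)

theorem apply_map_chainVector [DecidableEq ι] (h : IsOrthogonalChainFamily B f μ k v)
    (hf : B.IsSelfAdjoint f) (p q : Σ i, Fin (k i)) :
    B (f (chainVector f μ k v p)) (chainVector f μ k v q) =
      blockDiagonal' (fun i => μ i • Delta (k i) + Lam (k i)) p q := by
  by_cases hpq : p.1 = q.1
  · obtain ⟨i, r⟩ := p
    obtain ⟨_, s⟩ := q
    obtain rfl : i = _ := hpq
    rw [Matrix.blockDiagonal'_apply_eq]
    exact (h.isSelfDualChain i).apply_map_pow_rev_pow_rev hf r s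
  · rw [Matrix.blockDiagonal'_apply_ne _ _ _ hpq]
    exact h.pairwise_orthogonal hpq _
      ((h.isSelfDualChain p.1).map_mem_chainSpan_sub_smul_one _ (h.chainVector_mem p)) _
      (h.chainVector_mem q)

end IsOrthogonalChainFamily

end Gram

section DotProduct

variable {R m : Type*} [CommRing R] [Fintype m]

theorem nondegenerate_dotProductBilin :
    LinearMap.BilinForm.Nondegenerate (dotProductBilin (m := m) R R) := by
  constructor
  · exact fun x h => dotProduct_eq_zero x h
  · exact fun y h => dotProduct_eq_zero y fun x => (dotProduct_comm y x).trans (h x)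

theorem isSymm_dotProductBilin :
    LinearMap.BilinForm.IsSymm (dotProductBilin (m := m) R R) :=
  ⟨fun x y => dotProduct_comm x y⟩

theorem isSelfAdjoint_mulVecLin {A : Matrix m m R} (hA : A.IsSymm) :
    (dotProductBilin (m := m) R R).IsSelfAdjoint A.mulVecLin := fun x y => by
  simp only [dotProductBilin_apply_apply, Matrix.mulVecLin_apply]
  rw [Matrix.dotProduct_mulVec, ← Matrix.mulVec_transpose, hA]

end DotProduct

theorem exists_mul_mul_transpose_eq_blockDiagonal'_Delta_Lam {m : Type*} [Fintype m]
    {A : Matrix m m ℂ} (hA : A.IsSymm) :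
    ∃ (ℓ : ℕ) (μ : Fin ℓ → ℂ) (k : Fin ℓ → ℕ), (∀ i, 0 < k i) ∧ ∑ i, k i = Fintype.card m ∧
      ∃ W : Matrix (Σ i, Fin (k i)) m ℂ,
        W * Wᵀ = blockDiagonal' (fun i => Delta (k i)) ∧
        W * A * Wᵀ = blockDiagonal' fun i => μ i • Delta (k i) + Lam (k i) := by
  have hf := isSelfAdjoint_mulVecLin hA
  obtain ⟨ℓ, μ, k, v, h, hk⟩ := exists_isOrthogonalChainFamily nondegenerate_dotProductBilin
    isSymm_dotProductBilin hf
  refine ⟨ℓ, μ, k, fun i => (h.isSelfDualChain i).length_pos, by simpa using hk,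
    of (chainVector A.mulVecLin μ k v), ?_, ?_⟩
  · ext p q
    exact h.apply_chainVector hf p q
  · ext p q
    rw [← h.apply_map_chainVector hf p q, Matrix.mul_apply', Matrix.mul_apply_eq_vecMul,
      ← Matrix.mulVec_transpose, hA]
    rfl

theorem exists_mul_mul_transpose_eq_blockDiagonal'_Mblock {m : Type*} [Fintype m]
    {Rk : ∀ k : ℕ, Matrix (Fin k) (Fin k) ℂ}
    (hRk : ∀ k : ℕ, Rk k * Delta k * (Rk k)ᵀ = 1) {A : Matrix m m ℂ} (hA : A.IsSymm) :
    ∃ (ℓ : ℕ) (μ : Fin ℓ → ℂ) (k : Fin ℓ → ℕ), (∀ i, 0 < k i) ∧ ∑ i, k i = Fintype.card m ∧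
      ∃ Q : Matrix (Σ i, Fin (k i)) m ℂ,
        Q * Qᵀ = 1 ∧ Q * A * Qᵀ = blockDiagonal' fun i => Mblock (Rk (k i)) (μ i) := by
  obtain ⟨ℓ, μ, k, hk, hsum, W, hW, hWA⟩ := exists_mul_mul_transpose_eq_blockDiagonal'_Delta_Lam hA
  set D := blockDiagonal' fun i => Rk (k i) with hD
  have hcongr (N : ∀ i, Matrix (Fin (k i)) (Fin (k i)) ℂ) :
      D * blockDiagonal' N * Dᵀ =
        blockDiagonal' fun i => Rk (k i) * N i * (Rk (k i))ᵀ := by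
    simp only [hD, Matrix.blockDiagonal'_transpose, Matrix.blockDiagonal'_mul]
  refine ⟨ℓ, μ, k, hk, hsum, D * W, ?_, ?_⟩
  · calc D * W * (D * W)ᵀ = D * (W * Wᵀ) * Dᵀ := by
          simp only [Matrix.transpose_mul, Matrix.mul_assoc]
      _ = 1 := by simp only [hW, hcongr, hRk]; exact Matrix.blockDiagonal'_one
  · calc D * W * A * (D * W)ᵀ = D * (W * A * Wᵀ) * Dᵀ := by
          simp only [Matrix.transpose_mul, Matrix.mul_assoc]
      _ = _ := by simp only [hWA, hcongr, Mblock_eq_mul_mul_transpose (hRk _)]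

/-- Canonical form for complex symmetric matrices under the congruence action of
`O(n,ℂ)`: the orbit of any symmetric `A` contains a block diagonal matrix with blocks
`M_{kᵢ}(λᵢ)`, the `λᵢ` being eigenvalues of `A`, with
`charpoly(A) = ∏ (X - λᵢ)^{kᵢ}`; moreover `charpoly(M_k(λ)) = (X - λ)^k`. -/
theorem canonical_form (n : ℕ)
    (Rk : ∀ k : ℕ, Matrix (Fin k) (Fin k) ℂ)
    (hRk : ∀ k : ℕ, Rk k * Delta k * (Rk k)ᵀ = 1)
    (A : Matrix (Fin n) (Fin n) ℂ) (hA : A.IsSymm) :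
    (∃ (ℓ : ℕ) (lam : Fin ℓ → ℂ) (k : Fin ℓ → ℕ),
      (∀ i, 0 < k i) ∧ (∑ i, k i = n) ∧
      (∀ i, A.charpoly.IsRoot (lam i)) ∧
      A.charpoly = ∏ i, (Polynomial.X - Polynomial.C (lam i)) ^ (k i) ∧
      ∃ (S : Matrix (Fin n) (Fin n) ℂ) (e : (Σ i : Fin ℓ, Fin (k i)) ≃ Fin n),
        Sᵀ * S = 1 ∧
        S * A * Sᵀ = (Matrix.blockDiagonal'
          (fun i => Mblock (Rk (k i)) (lam i))).submatrix e.symm e.symm) ∧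
    (∀ (k : ℕ) (μ : ℂ),
      (Mblock (Rk k) μ).charpoly = (Polynomial.X - Polynomial.C μ) ^ k) := by
  refine ⟨?_, fun k μ => charpoly_Mblock (hRk k) μ⟩
  obtain ⟨ℓ, μ, k, hk, hsum, Q, hQ, hQA⟩ :=
    exists_mul_mul_transpose_eq_blockDiagonal'_Mblock hRk hA
  let e : (Σ i, Fin (k i)) ≃ Fin n := Fintype.equivOfCardEq (by simpa using hsum)
  let S : Matrix (Fin n) (Fin n) ℂ := Q.submatrix e.symm id
  have hS : Sᵀ * S = 1 := mul_eq_one_comm.1 <|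
    (congrArg (·.submatrix e.symm e.symm) hQ).trans (Matrix.submatrix_one_equiv e.symm)
  have hSA : S * A * Sᵀ =
      (blockDiagonal' fun i => Mblock (Rk (k i)) (μ i)).submatrix e.symm e.symm :=
    congrArg (·.submatrix e.symm e.symm) hQA
  have hchar : A.charpoly = ∏ i, (X - C (μ i)) ^ k i := by
    rw [← charpoly_mul_mul_transpose hS, hSA, ← Matrix.reindex_apply, Matrix.charpoly_reindex,
      charpoly_blockDiagonal']
    simp only [charpoly_Mblock (hRk _)]
  have hroot (i : Fin ℓ) : A.charpoly.IsRoot (μ i) := by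
    rw [hchar, IsRoot, eval_prod]
    exact Finset.prod_eq_zero (Finset.mem_univ i) (by simp [(hk i).ne'])
  exact ⟨ℓ, μ, k, hk, by simpa using hsum, hroot, hchar, S, e, hS, hSA⟩
end

section
/- For all n ≥ 3, the discriminant polynomial disc: Sym²(ℂⁿ) → ℂ, sending a complex symmetric matrix A to the discriminant of its characteristic polynomial, is irreducible over ℂ. -/
open Matrix

/-- Index set for the independent entries of a symmetric `n × n` matrix. -/
abbrev SymIdx (n : ℕ) := {p : Fin n × Fin n // p.1 ≤ p.2}

/-!
The discriminant is invariant under `A ↦ Qᵀ A Q` for orthogonal `Q`, and over an algebraically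
closed field the rotations of a coordinate plane form a group isomorphic to the divisible group
`Kˣ`. Such a group permutes the finitely many divisors of the discriminant (up to units), so it
fixes each divisor `q` up to constants. For `n ≥ 3` the half turn in the `i`-`k` plane inverts the
rotations `ρ s` of the `i`-`j` plane, hence `ρ s q = ρ s⁻¹ q` and `ρ (s ^ 2) q = q`: divisors are
invariant. As a quarter turn acts on diagonal matrices by a transposition, the restriction of `q`
to diagonal matrices is a symmetric polynomial dividing `∏ (xᵢ - xⱼ) ^ 2` over `i < j`. A
nonconstant such polynomial is divisible by some `xᵢ - xⱼ`, hence by symmetry by all of them, and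
by their squares because a symmetric polynomial vanishes to even order along `xᵢ = xⱼ`. So one of
two complementary divisors restricts to a constant, and by homogeneity is itself constant.
-/

section Discriminant

open Polynomial

variable {R S : Type*} [CommRing R] [CommRing S]

lemma discr_eq_resultant_derivative [Nontrivial R] {f : R[X]} (hf : f.Monic) :
    f.discr = (-1) ^ (f.natDegree * (f.natDegree - 1) / 2) *
      f.resultant (derivative f) f.natDegree (f.natDegree - 1) := by
  rcases Nat.eq_zero_or_pos f.natDegree with hd | hd
  · rw [hf.natDegree_eq_zero.mp hd, ← C_1, discr_C]
    simp
  · rw [resultant_deriv (natDegree_pos_iff_degree_pos.mp hd), hf.leadingCoeff, mul_one,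
      ← mul_assoc, ← mul_pow, neg_one_mul, neg_neg, one_pow, one_mul]

lemma discr_map (φ : R →+* S) {f : R[X]} (hf : f.Monic) : (f.map φ).discr = φ f.discr := by
  nontriviality S
  have := φ.domain_nontrivial
  rw [discr_eq_resultant_derivative (hf.map φ), discr_eq_resultant_derivative hf,
    hf.natDegree_map, derivative_map, resultant_map_map, map_mul, map_pow, map_neg, map_one]

lemma eq_prod_X_sub_C_roots_toList [IsDomain R] {p : R[X]} (hsplits : p.Splits) (hp : p.Monic) :
    p = ∏ i, (X - C (p.roots.toList.get i)) := by
  conv_lhs => rw [hsplits.eq_prod_roots_of_monic hp, ← Multiset.coe_toList p.roots,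
    Multiset.map_coe, Multiset.prod_coe, ← List.ofFn_get p.roots.toList, List.map_ofFn,
    List.prod_ofFn]
  rfl

variable {ι : Type*} [Fintype ι] [LinearOrder ι]

@[to_additive]
lemma prod_offDiag_eq_prod_lt {M : Type*} [CommMonoid M] (f : ι × ι → M) :
    ∏ ij ∈ Finset.univ.offDiag, f ij = ∏ ij : ι × ι with ij.1 < ij.2, f ij * f ij.swap := by
  rw [Finset.prod_mul_distrib, ← Finset.prod_filter_mul_prod_filter_not _ (fun ij ↦ ij.1 < ij.2)]
  congr 1
  · exact Finset.prod_congr (by grind) fun _ _ ↦ rfl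
  · exact Finset.prod_equiv (Equiv.prodComm ι ι) (by grind) (by simp)

variable (ι) in
lemma two_mul_card_filter_lt :
    2 * (Finset.univ.filter fun ij : ι × ι ↦ ij.1 < ij.2).card =
      Fintype.card ι * (Fintype.card ι - 1) := by
  have h := sum_offDiag_eq_sum_lt fun _ : ι × ι ↦ 1
  rw [Finset.sum_const, Finset.sum_const, Finset.offDiag_card, Finset.card_univ] at h
  rw [Nat.mul_sub_one, mul_comm]
  simpa using h.symm

lemma discr_prod_X_sub_C [Nontrivial R] (r : ι → R) :
    (∏ i, (X - C (r i))).discr = ∏ ij : ι × ι with ij.1 < ij.2, (r ij.1 - r ij.2) ^ 2 := by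
  set f := ∏ i, (X - C (r i)) with hf
  have hmonic : f.Monic := monic_prod_of_monic _ _ fun i _ ↦ monic_X_sub_C (r i)
  have hdeg : f.natDegree = Fintype.card ι := natDegree_finsetProd_X_sub_C_eq_card _ _
  have hres : f.resultant (derivative f) f.natDegree (f.natDegree - 1) =
      ∏ ij ∈ Finset.univ.offDiag, (r ij.1 - r ij.2) := by
    rw [hf, resultant_prod_left _ _ _ _ (by simp) (natDegree_derivative_le _)]
    rw [Finset.prod_finset_product _ Finset.univ (Finset.univ.erase ·) (by grind)]
    refine Finset.prod_congr rfl fun i _ ↦ ?_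
    rw [natDegree_X_sub_C, resultant_X_sub_C_left _ _ _ (natDegree_derivative_le _),
      ← Lagrange.nodal_eq, Lagrange.eval_nodal_derivative_eval_node_eq (Finset.mem_univ i),
      Lagrange.eval_nodal]
  rw [discr_eq_resultant_derivative hmonic, hres, prod_offDiag_eq_prod_lt, hdeg,
    ← two_mul_card_filter_lt ι, Nat.mul_div_cancel_left _ two_pos, ← Finset.prod_const,
    ← Finset.prod_mul_distrib]
  exact Finset.prod_congr rfl fun ij _ ↦ by simp; ring

variable {n : Type*} [Fintype n] [DecidableEq n]

lemma matrix_discr_map (φ : R →+* S) (A : Matrix n n R) : (A.map φ).discr = φ A.discr := by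
  rw [Matrix.discr, charpoly_map, discr_map φ A.charpoly_monic, Matrix.discr]

lemma matrix_discr_diagonal [Nontrivial R] (x : ι → R) :
    (diagonal x).discr = ∏ ij : ι × ι with ij.1 < ij.2, (x ij.1 - x ij.2) ^ 2 := by
  rw [Matrix.discr, charpoly_diagonal, discr_prod_X_sub_C]

lemma matrix_discr_mul_mul {P Q : Matrix n n R} (hQP : Q * P = 1) (A : Matrix n n R) :
    (P * A * Q).discr = A.discr := by
  rw [Matrix.discr, charpoly_mul_comm, ← mul_assoc, hQP, one_mul, Matrix.discr]

lemma charpoly_smul_eq_prod {K m : Type*} [Field K] [Infinite K] [Fintype m]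
    {A : Matrix n n K} {r : m → K} (hr : A.charpoly = ∏ i, (X - C (r i))) (t : K) :
    (t • A).charpoly = ∏ i, (X - C (t * r i)) := by
  have hcard : Fintype.card n = Fintype.card m := by
    rw [← A.charpoly_natDegree_eq_dim, hr, natDegree_finsetProd_X_sub_C_eq_card, Finset.card_univ]
  rcases eq_or_ne t 0 with rfl | ht
  · simp [charpoly_zero, hcard]
  refine funext fun x ↦ ?_
  have hscale : scalar n x - t • A = t • (scalar n (t⁻¹ * x) - A) := by
    rw [smul_sub, scalar_apply, scalar_apply, ← diagonal_smul, Pi.smul_def]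
    simp [ht]
  rw [eval_charpoly, hscale, det_smul, ← eval_charpoly, hr, eval_prod, eval_prod, hcard,
    ← Finset.card_univ, ← Finset.prod_const, ← Finset.prod_mul_distrib]
  exact Finset.prod_congr rfl fun i _ ↦ by simp [mul_sub, ht]

lemma exists_charpoly_eq_prod_X_sub_C {K : Type*} [Field K] [IsAlgClosed K] (A : Matrix n n K) :
    ∃ r : Fin (Fintype.card n) → K, A.charpoly = ∏ i, (X - C (r i)) := by
  have hsplits := IsAlgClosed.splits A.charpoly
  have hlen : A.charpoly.roots.toList.length = Fintype.card n := by
    rw [Multiset.length_toList, ← hsplits.natDegree_eq_card_roots, A.charpoly_natDegree_eq_dim]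
  rw [← hlen]
  exact ⟨_, eq_prod_X_sub_C_roots_toList hsplits A.charpoly_monic⟩

lemma matrix_discr_smul [IsDomain R] (t : R) (A : Matrix n n R) :
    (t • A).discr = t ^ (Fintype.card n * (Fintype.card n - 1)) * A.discr := by
  let φ := (algebraMap (FractionRing R) (AlgebraicClosure (FractionRing R))).comp
    (algebraMap R (FractionRing R))
  have hφ : Function.Injective φ :=
    (algebraMap (FractionRing R) _).injective.comp (IsFractionRing.injective R _)
  have hsmul : (t • A).map φ = φ t • A.map φ := by ext; simp
  obtain ⟨r, hr⟩ := exists_charpoly_eq_prod_X_sub_C (A.map φ)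
  have hcard := two_mul_card_filter_lt (Fin (Fintype.card n))
  rw [Fintype.card_fin] at hcard
  apply hφ
  rw [map_mul, map_pow, ← matrix_discr_map, ← matrix_discr_map, hsmul, Matrix.discr,
    charpoly_smul_eq_prod hr, discr_prod_X_sub_C, Matrix.discr, hr, discr_prod_X_sub_C,
    ← hcard, pow_mul, ← Finset.prod_const, ← Finset.prod_mul_distrib]
  exact Finset.prod_congr rfl fun _ _ ↦ by ring

lemma disc_eq_discr {p : ℂ[X]} (hp : p.Monic) : disc p = p.discr := by
  conv_rhs => rw [eq_prod_X_sub_C_roots_toList (IsAlgClosed.splits p) hp]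
  rw [discr_prod_X_sub_C, disc, hp.leadingCoeff, one_pow, one_mul]

end Discriminant

section DifferencesOfVariables

open MvPolynomial

variable {σ R : Type*} [CommRing R]

lemma X_sub_X_dvd_iff_rename_update_eq_zero [DecidableEq σ] {i j : σ} {f : MvPolynomial σ R} :
    X i - X j ∣ f ↔ rename (Function.update id i j) f = 0 := by
  set I : Ideal (MvPolynomial σ R) := Ideal.span {X i - X j}
  constructor
  · rintro ⟨g, rfl⟩
    by_cases hij : j = i <;> simp [hij]
  · intro hf
    have hmk : (Ideal.Quotient.mkₐ R I).comp (rename (Function.update id i j)) =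
        Ideal.Quotient.mkₐ R I := by
      refine algHom_ext fun k ↦ ?_
      rcases eq_or_ne k i with rfl | hk
      · simpa using (Ideal.Quotient.eq.mpr (Ideal.mem_span_singleton_self _)).symm
      · simp [hk]
    have := DFunLike.congr_fun hmk f
    rw [AlgHom.comp_apply, hf, map_zero] at this
    exact Ideal.mem_span_singleton.mp (Ideal.Quotient.eq_zero_iff_mem.mp this.symm)

lemma prime_X_sub_X [IsDomain R] {i j : σ} (hij : i ≠ j) :
    Prime (X i - X j : MvPolynomial σ R) := by
  classical
  refine ⟨sub_ne_zero.mpr fun h ↦ hij (X_injective h), fun hu ↦ ?_, fun f g hfg ↦ ?_⟩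
  · simpa using X_sub_X_dvd_iff_rename_update_eq_zero.mp (hu.dvd (a := 1))
  · simpa only [X_sub_X_dvd_iff_rename_update_eq_zero, map_mul, mul_eq_zero] using hfg

lemma X_sub_X_dvd_X_sub_X_iff [Nontrivial R] {i j k l : σ} (hkl : k ≠ l) :
    (X i - X j : MvPolynomial σ R) ∣ X k - X l ↔ (i = k ∧ j = l) ∨ (i = l ∧ j = k) := by
  classical
  rw [X_sub_X_dvd_iff_rename_update_eq_zero, map_sub, rename_X, rename_X, sub_eq_zero,
    (X_injective (R := R)).eq_iff]
  grind [Function.update_apply]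

lemma isSymmetric_of_forall_swap [Finite σ] [DecidableEq σ] {f : MvPolynomial σ R}
    (hf : ∀ i j, i ≠ j → rename (Equiv.swap i j) f = f) : f.IsSymmetric := by
  intro τ
  induction τ using Equiv.Perm.swap_induction_on with
  | one => simp
  | swap_mul τ i j hij ih => rw [Equiv.Perm.coe_mul, ← rename_rename, ih, hf i j hij]

lemma X_sub_X_dvd_of_isSymmetric {f : MvPolynomial σ R} (hf : f.IsSymmetric) {i j k l : σ}
    (hij : i ≠ j) (hkl : k ≠ l) (hdvd : X i - X j ∣ f) : X k - X l ∣ f := by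
  obtain ⟨τ, hτi, hτj⟩ := MulAction.is_two_pretransitive_iff.mp
    (Equiv.Perm.isMultiplyPretransitive σ 2) hij hkl
  have := map_dvd (rename (R := R) τ) hdvd
  rw [Equiv.Perm.smul_def] at hτi hτj
  simpa only [map_sub, rename_X, hτi, hτj, hf τ] using this

lemma X_sub_X_sq_dvd_of_isSymmetric [IsDomain R] (h2 : (2 : R) ≠ 0) {f : MvPolynomial σ R}
    (hf : f.IsSymmetric) {i j : σ} (hij : i ≠ j) (hdvd : X i - X j ∣ f) :
    (X i - X j) ^ 2 ∣ f := by
  classical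
  obtain ⟨g, rfl⟩ := hdvd
  have hanti : rename (Equiv.swap i j) g = -g := by
    apply mul_left_cancel₀ (prime_X_sub_X hij).ne_zero
    have := hf (Equiv.swap i j)
    simp only [map_mul, map_sub, rename_X, Equiv.swap_apply_left, Equiv.swap_apply_right] at this
    linear_combination -this
  rw [pow_two]
  refine mul_dvd_mul_left _ (X_sub_X_dvd_iff_rename_update_eq_zero.mpr ?_)
  have hcollapse : Function.update id i j ∘ Equiv.swap i j = Function.update id i j := by
    ext k
    rw [Function.comp_apply]
    grind
  have h := congrArg (rename (Function.update id i j)) hanti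
  rw [rename_rename, hcollapse, map_neg] at h
  have : C 2 * rename (Function.update id i j) g = 0 := by
    rw [map_ofNat]; linear_combination h
  exact (mul_eq_zero.mp this).resolve_left (by simpa using h2)

lemma prod_X_sub_X_sq_dvd_of_isSymmetric {ι : Type*} [Fintype ι] [LinearOrder ι] [IsDomain R]
    [UniqueFactorizationMonoid R] (h2 : (2 : R) ≠ 0) {f : MvPolynomial ι R} (hf : f.IsSymmetric)
    (hunit : ¬ IsUnit f) (hdvd : f ∣ ∏ ij : ι × ι with ij.1 < ij.2, (X ij.1 - X ij.2) ^ 2) :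
    ∏ ij : ι × ι with ij.1 < ij.2, (X ij.1 - X ij.2) ^ 2 ∣ f := by
  have hprime : ∀ ij ∈ Finset.univ.filter fun ij : ι × ι ↦ ij.1 < ij.2,
      Prime (X ij.1 - X ij.2 : MvPolynomial ι R) := fun ij h ↦
    prime_X_sub_X (Finset.mem_filter.mp h).2.ne
  have hf0 : f ≠ 0 := ne_zero_of_dvd_ne_zero
    (Finset.prod_ne_zero_iff.mpr fun ij h ↦ pow_ne_zero 2 (hprime ij h).ne_zero) hdvd
  obtain ⟨q, hq, hqf⟩ := WfDvdMonoid.exists_irreducible_factor hunit hf0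
  obtain ⟨ij, hij, hqij⟩ := hq.prime.exists_mem_finset_dvd (hqf.trans hdvd)
  have hijf : X ij.1 - X ij.2 ∣ f :=
    (hq.prime.associated_of_dvd (hprime ij hij) (hq.prime.dvd_of_dvd_pow hqij)).symm.dvd.trans hqf
  refine Finset.prod_dvd_of_isRelPrime (fun kl hkl mn hmn hne ↦ ?_) fun kl hkl ↦ ?_
  · refine IsRelPrime.pow ((hprime kl hkl).irreducible.isRelPrime_iff_not_dvd.mpr ?_)
    rw [X_sub_X_dvd_X_sub_X_iff (by grind)]
    grind
  · exact X_sub_X_sq_dvd_of_isSymmetric h2 hf (by grind)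
      (X_sub_X_dvd_of_isSymmetric hf (by grind) (by grind) hijf)

end DifferencesOfVariables

section DivisibleGroups

variable {G : Type*} [Group G] [RootableBy G ℕ]

lemma subgroup_eq_top_of_finiteIndex (H : Subgroup G) [H.FiniteIndex] : H = ⊤ := by
  refine (Subgroup.eq_top_iff' H).mpr fun g ↦ ?_
  obtain ⟨a, rfl⟩ := RootableBy.surjective_pow G ℕ H.index.factorial_ne_zero g
  exact Subgroup.pow_mem_of_index_ne_zero_of_dvd Subgroup.FiniteIndex.index_ne_zero a
    fun m hm hle ↦ Nat.dvd_factorial hm hle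

lemma associated_apply_of_dvd_of_forall_apply_eq {K R : Type*} [CommSemiring K] [CommRing R]
    [IsDomain R] [UniqueFactorizationMonoid R] [Algebra K R] (ρ : G →* (R →ₐ[K] R)) {p q : R}
    (hp : p ≠ 0) (hρ : ∀ g, ρ g p = p) (hqp : q ∣ p) (g : G) : Associated q (ρ g q) := by
  have mul_apply (a b : G) : ρ (a * b) q = ρ a (ρ b q) := by rw [map_mul, AlgHom.mul_apply]
  have inv_apply (a : G) : ρ a⁻¹ (ρ a q) = q := by
    rw [← mul_apply, inv_mul_cancel, map_one, AlgHom.one_apply]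
  let H : Subgroup G :=
    { carrier := {g | Associated q (ρ g q)}
      one_mem' := by simp
      mul_mem' {a b} ha hb := by simpa [mul_apply] using ha.trans (hb.map (ρ a))
      inv_mem' {a} ha := by simpa [inv_apply] using (ha.map (ρ a⁻¹)).symm }
  let orbitMap (g : G) : {x : Associates R // x ∣ Associates.mk p} :=
    ⟨Associates.mk (ρ g q), Associates.mk_dvd_mk.mpr (hρ g ▸ map_dvd (ρ g) hqp)⟩
  have : Fintype (Associates R)ˣ := Fintype.ofFinite _
  have := UniqueFactorizationMonoid.fintypeSubtypeDvd _ (Associates.mk_ne_zero.mpr hp)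
  have horbit {a b : G} (hab : orbitMap a = orbitMap b) : a⁻¹ * b ∈ H := by
    have := (Associates.mk_eq_mk_iff_associated.mp (congrArg Subtype.val hab)).map (ρ a⁻¹)
    rwa [inv_apply, ← mul_apply] at this
  have : Finite (G ⧸ H) := Finite.of_injective (fun x ↦ orbitMap x.out) fun x y hxy ↦ by
    rw [← x.out_eq, ← y.out_eq]
    exact QuotientGroup.eq.mpr (horbit hxy)
  have := H.finiteIndex_of_finite_quotient
  have hg : g ∈ H := subgroup_eq_top_of_finiteIndex H ▸ Subgroup.mem_top g
  exact hg

end DivisibleGroups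

noncomputable instance unitsRootableBy (K : Type*) [Field K] [IsAlgClosed K] : RootableBy Kˣ ℕ :=
  rootableByOfPowLeftSurj _ _ fun {n} hn u ↦ by
    obtain ⟨z, hz⟩ := IsAlgClosed.exists_pow_nat_eq (u : K) (Nat.pos_of_ne_zero hn)
    have hz0 : z ≠ 0 := by rintro rfl; exact u.ne_zero (by rw [← hz, zero_pow hn])
    exact ⟨Units.mk0 z hz0, Units.ext (by simp [hz])⟩

section UpToConstants

open MvPolynomial

variable {σ K : Type*} [Field K]

lemma exists_eq_smul_of_associated {p q : MvPolynomial σ K} (h : Associated p q) :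
    ∃ c : K, q = c • p := by
  obtain ⟨u, rfl⟩ := h
  obtain ⟨c, -, hc⟩ := MvPolynomial.isUnit_iff_eq_C_of_isReduced.mp u.isUnit
  exact ⟨c, by rw [hc, smul_eq_C_mul, mul_comm]⟩

lemma apply_apply_comm_of_associated {φ ψ : MvPolynomial σ K →ₐ[K] MvPolynomial σ K}
    {q : MvPolynomial σ K} (hφ : Associated q (φ q)) (hψ : Associated q (ψ q)) :
    φ (ψ q) = ψ (φ q) := by
  obtain ⟨c, hc⟩ := exists_eq_smul_of_associated hφ
  obtain ⟨d, hd⟩ := exists_eq_smul_of_associated hψ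
  rw [hc, hd, map_smul, map_smul, hc, hd, smul_comm]

end UpToConstants

section PlaneRotations

variable {K m : Type*} [DecidableEq m]

section CommRing

variable [CommRing K]

/-- The matrix acting on the coordinates `i` and `j` by `!![c, s; -s, c]` and fixing the others.
It is orthogonal when `c ^ 2 + s ^ 2 = 1`. -/
def planeRotation (i j : m) (c s : K) : Matrix m m K :=
  1 + (c - 1) • (single i i 1 + single j j 1) + s • (single i j 1 - single j i 1)

lemma planeRotation_one_zero (i j : m) : planeRotation i j (1 : K) 0 = 1 := by
  simp [planeRotation]

lemma planeRotation_transpose (i j : m) (c s : K) :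
    (planeRotation i j c s)ᵀ = planeRotation i j c (-s) := by
  simp only [planeRotation, transpose_add, transpose_sub, transpose_smul, transpose_single,
    transpose_one]
  module

lemma planeRotation_map {L : Type*} [CommRing L] (φ : K →+* L) (i j : m) (c s : K) :
    (planeRotation i j c s).map φ = planeRotation i j (φ c) (φ s) := by
  ext a b
  simp [planeRotation, single_apply, one_apply, apply_ite φ]

variable [Fintype m] {i j k : m}

lemma planeRotation_mul (hij : i ≠ j) (c s c' s' : K) :
    planeRotation i j c s * planeRotation i j c' s' =
      planeRotation i j (c * c' - s * s') (c * s' + s * c') := by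
  unfold planeRotation
  set T : Matrix m m K := single i i 1 + single j j 1 with hT
  set J : Matrix m m K := single i j 1 - single j i 1 with hJ
  have hTT : T * T = T := by simp [hT, mul_add, add_mul, hij, hij.symm]
  have hTJ : T * J = J := by simp [hT, hJ, mul_sub, add_mul, hij, hij.symm]
  have hJT : J * T = J := by simp [hT, hJ, sub_mul, mul_add, hij, hij.symm]; abel
  have hJJ : J * J = -T := by simp [hT, hJ, sub_mul, mul_sub, hij, hij.symm]; abel
  simp only [mul_add, add_mul, smul_mul_assoc, mul_smul_comm, hTT, hTJ, hJT, hJJ, one_mul, mul_one]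
  module

lemma planeRotation_neg_one_zero_mul (hij : i ≠ j) (hik : i ≠ k) (hjk : j ≠ k) (c s : K) :
    planeRotation i k (-1) 0 * planeRotation i j c s =
      planeRotation i j c (-s) * planeRotation i k (-1) 0 := by
  simp only [planeRotation, zero_smul, add_zero, mul_add, add_mul, mul_sub, sub_mul, smul_mul_assoc,
    mul_smul_comm, one_mul, mul_one, single_mul_single_same, single_mul_single_of_ne _ _ _ _ hij,
    single_mul_single_of_ne _ _ _ _ hij.symm, single_mul_single_of_ne _ _ _ _ hik,
    single_mul_single_of_ne _ _ _ _ hik.symm, single_mul_single_of_ne _ _ _ _ hjk,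
    single_mul_single_of_ne _ _ _ _ hjk.symm]
  module

lemma diagonal_mul_planeRotation_zero_one (hij : i ≠ j) (x : m → K) :
    diagonal x * planeRotation i j 0 1 = planeRotation i j 0 1 * diagonal (x ∘ Equiv.swap i j) := by
  ext a b
  rw [diagonal_mul, mul_diagonal, Function.comp_apply]
  simp only [planeRotation, Matrix.add_apply, Matrix.sub_apply, Matrix.smul_apply, single_apply,
    one_apply, smul_eq_mul]
  rcases eq_or_ne b i with rfl | hbi
  · grind [Equiv.swap_apply_left]
  rcases eq_or_ne b j with rfl | hbj
  · grind [Equiv.swap_apply_right]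
  · grind [Equiv.swap_apply_of_ne_of_ne]

end CommRing

section Field

variable [Fintype m] [Field K] {ι : K} {i j k : m}

/-- The rotations of the `i`-`j` plane as a group homomorphism: over a field containing a square
root `ι` of `-1`, they are parametrised by `t = c + ι s`, with `t⁻¹ = c - ι s`. -/
def rotationTorus (h2 : (2 : K) ≠ 0) (hι : ι ^ 2 = -1) (hij : i ≠ j) : Kˣ →* Matrix m m K where
  toFun t := planeRotation i j ((t + ↑t⁻¹) / 2) (ι * (↑t⁻¹ - t) / 2)
  map_one' := by simp [planeRotation_one_zero, one_add_one_eq_two, h2]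
  map_mul' t u := by
    rw [planeRotation_mul hij, mul_inv, Units.val_mul, Units.val_mul]
    congr 1
    · field_simp
      linear_combination (t - (↑t⁻¹ : K)) * (u - (↑u⁻¹ : K)) * hι
    · field_simp
      ring

variable (h2 : (2 : K) ≠ 0) (hι : ι ^ 2 = -1) (hij : i ≠ j)

lemma rotationTorus_transpose (t : Kˣ) :
    (rotationTorus h2 hι hij t)ᵀ = rotationTorus h2 hι hij t⁻¹ := by
  change (planeRotation i j _ _)ᵀ = planeRotation i j _ _
  rw [planeRotation_transpose, inv_inv]
  congr 1 <;> ring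

lemma rotationTorus_mul_transpose (t : Kˣ) :
    rotationTorus h2 hι hij t * (rotationTorus h2 hι hij t)ᵀ = 1 := by
  rw [rotationTorus_transpose, ← map_mul, mul_inv_cancel, map_one]

lemma rotationTorus_neg_one : rotationTorus h2 hι hij (-1) = planeRotation i j (-1) 0 := by
  change planeRotation i j _ _ = _
  congr 1
  · rw [inv_neg_one, Units.val_neg, Units.val_one]
    field_simp
    norm_num
  · simp

lemma exists_rotationTorus_eq : ∃ t, rotationTorus h2 hι hij t = planeRotation i j 0 1 := by
  have hmul : ι * -ι = 1 := by linear_combination -hι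
  refine ⟨⟨ι, -ι, hmul, mul_comm ι _ ▸ hmul⟩, ?_⟩
  change planeRotation i j ((ι + -ι) / 2) (ι * (-ι - ι) / 2) = _
  congr 1
  · simp
  · field_simp
    linear_combination -2 * hι

lemma rotationTorus_neg_one_mul (hik : i ≠ k) (hjk : j ≠ k) (t : Kˣ) :
    rotationTorus h2 hι hik (-1) * rotationTorus h2 hι hij t =
      rotationTorus h2 hι hij t⁻¹ * rotationTorus h2 hι hik (-1) := by
  rw [rotationTorus_neg_one, ← rotationTorus_transpose]
  change _ * planeRotation i j _ _ = (planeRotation i j _ _)ᵀ * _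
  rw [planeRotation_transpose, planeRotation_neg_one_zero_mul hij hik hjk]

end Field

end PlaneRotations

section Scaling

open MvPolynomial

variable {σ R : Type*} [CommRing R]

lemma eq_C_coeff_zero_of_dvd_C_mul_X_pow [IsDomain R] {f : Polynomial R} {a : R} {d : ℕ}
    (ha : a ≠ 0) (hf : f ∣ Polynomial.C a * Polynomial.X ^ d) (h0 : f.coeff 0 ≠ 0) :
    f = Polynomial.C (f.coeff 0) := by
  obtain ⟨g, hg⟩ := hf
  have hfg : f * g ≠ 0 := by simp [← hg, ha]
  have hdeg := congrArg Polynomial.natDegree hg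
  have htrail := congrArg Polynomial.natTrailingDegree hg
  rw [Polynomial.natDegree_C_mul_X_pow _ _ ha,
    Polynomial.natDegree_mul (left_ne_zero_of_mul hfg) (right_ne_zero_of_mul hfg)] at hdeg
  rw [Polynomial.C_mul_X_pow_eq_monomial, Polynomial.natTrailingDegree_monomial ha,
    Polynomial.natTrailingDegree_mul (left_ne_zero_of_mul hfg) (right_ne_zero_of_mul hfg),
    Polynomial.natTrailingDegree_eq_zero_of_constantCoeff_ne_zero h0] at htrail
  have := g.natTrailingDegree_le_natDegree
  exact Polynomial.eq_C_of_natDegree_eq_zero (by lia)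

/-- The substitution `x ↦ t x` of all variables, with `t` a new variable; it sends a homogeneous
polynomial `f` of degree `d` to `f * t ^ d`. -/
noncomputable def scaling : MvPolynomial σ R →ₐ[R] Polynomial (MvPolynomial σ R) :=
  aeval fun s ↦ Polynomial.C (X s) * Polynomial.X

lemma eval_one_scaling (f : MvPolynomial σ R) : (scaling f).eval 1 = f := by
  change ((Polynomial.evalRingHom 1).comp scaling.toRingHom) f = RingHom.id _ f
  congr 1
  exact ringHom_ext (by simp [scaling]) (by simp [scaling])

lemma coeff_zero_scaling (f : MvPolynomial σ R) : (scaling f).coeff 0 = C (constantCoeff f) := by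
  rw [← Polynomial.constantCoeff_apply]
  change (Polynomial.constantCoeff.comp scaling.toRingHom) f = C.comp constantCoeff f
  congr 1
  exact ringHom_ext (by simp [scaling]) (by simp [scaling])

lemma eq_C_constantCoeff_of_dvd_of_scaling_eq [IsDomain R] {f p : MvPolynomial σ R} {d : ℕ}
    (hp : p ≠ 0) (hscale : scaling p = Polynomial.C p * Polynomial.X ^ d) (hfp : f ∣ p)
    (hf : constantCoeff f ≠ 0) : f = C (constantCoeff f) := by
  have hconst : scaling f = Polynomial.C ((scaling f).coeff 0) :=
    eq_C_coeff_zero_of_dvd_C_mul_X_pow hp (hscale ▸ map_dvd scaling hfp)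
      (by simpa [coeff_zero_scaling] using hf)
  conv_lhs => rw [← eval_one_scaling f, hconst, Polynomial.eval_C, coeff_zero_scaling]

end Scaling

section SymmetricMatrices

open MvPolynomial

lemma isSymm_transpose_mul_mul {m R : Type*} [Fintype m] [CommRing R] {A : Matrix m m R}
    (hA : A.IsSymm) (Q : Matrix m m R) : (Qᵀ * A * Q).IsSymm := by
  rw [IsSymm, transpose_mul, transpose_mul, transpose_transpose, hA.eq, mul_assoc]

variable {n : ℕ} {K : Type*} [CommRing K]

variable (n K) in
/-- The generic symmetric matrix, whose entries on and above the diagonal are the variables. -/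
noncomputable def genericSymm : Matrix (Fin n) (Fin n) (MvPolynomial (SymIdx n) K) :=
  of fun i j ↦ X ⟨(min i j, max i j), min_le_max⟩

lemma genericSymm_isSymm : (genericSymm n K).IsSymm := by
  ext i j
  simp [genericSymm, min_comm, max_comm]

variable (n K) in
/-- The discriminant of the characteristic polynomial of a symmetric `n × n` matrix over `K`, as a
polynomial in the entries on and above the diagonal. -/
noncomputable def symDiscr : MvPolynomial (SymIdx n) K := (genericSymm n K).discr

variable {S T : Type*} [CommRing S] [Algebra K S] [CommRing T] [Algebra K T]

/-- Evaluation of polynomials in the entries of a symmetric matrix at a matrix `A`, of which it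
only uses the entries on and above the diagonal. -/
noncomputable def evalSymm (A : Matrix (Fin n) (Fin n) S) : MvPolynomial (SymIdx n) K →ₐ[K] S :=
  aeval fun s ↦ A s.1.1 s.1.2

lemma map_evalSymm_genericSymm {A : Matrix (Fin n) (Fin n) S} (hA : A.IsSymm) :
    (genericSymm n K).map (evalSymm A) = A := by
  ext i j
  rcases le_total i j with h | h <;> simp [genericSymm, evalSymm, h, hA.apply]

lemma evalSymm_genericSymm : evalSymm (genericSymm n K) = AlgHom.id K _ :=
  algHom_ext fun s ↦ by simp [genericSymm, evalSymm, s.2]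

lemma comp_evalSymm (φ : S →ₐ[K] T) (A : Matrix (Fin n) (Fin n) S) :
    φ.comp (evalSymm A) = evalSymm (A.map φ) :=
  algHom_ext fun s ↦ by simp [evalSymm]

lemma evalSymm_symDiscr {A : Matrix (Fin n) (Fin n) S} (hA : A.IsSymm) :
    evalSymm A (symDiscr n K) = A.discr := by
  conv_rhs => rw [← map_evalSymm_genericSymm (K := K) hA]
  exact (matrix_discr_map (evalSymm (K := K) A).toRingHom _).symm

lemma scaling_symDiscr [IsDomain K] :
    scaling (symDiscr n K) = Polynomial.C (symDiscr n K) * Polynomial.X ^ (n * (n - 1)) := by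
  have hscaling : (scaling : MvPolynomial (SymIdx n) K →ₐ[K] _) =
      evalSymm ((Polynomial.X : Polynomial (MvPolynomial (SymIdx n) K)) •
        (genericSymm n K).map Polynomial.C) :=
    algHom_ext fun s ↦ by simp [scaling, evalSymm, genericSymm, s.2]
  rw [hscaling, evalSymm_symDiscr ((genericSymm_isSymm.map _).smul _), matrix_discr_smul,
    matrix_discr_map, Fintype.card_fin, mul_comm, symDiscr]

/-- The substitution `A ↦ Qᵀ * A * Q` in polynomials in the entries of a symmetric matrix `A`. -/
noncomputable def congruence (Q : Matrix (Fin n) (Fin n) K) :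
    MvPolynomial (SymIdx n) K →ₐ[K] MvPolynomial (SymIdx n) K :=
  evalSymm ((Q.map C)ᵀ * genericSymm n K * Q.map C)

lemma evalSymm_comp_congruence {A : Matrix (Fin n) (Fin n) S} (hA : A.IsSymm)
    (Q : Matrix (Fin n) (Fin n) K) :
    (evalSymm A).comp (congruence Q) =
      evalSymm ((Q.map (algebraMap K S))ᵀ * A * Q.map (algebraMap K S)) := by
  have hQ : (Q.map C).map (evalSymm A) = Q.map (algebraMap K S) := by
    ext
    simp [evalSymm]
  rw [congruence, comp_evalSymm, Matrix.map_mul, Matrix.map_mul, transpose_map, hQ,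
    map_evalSymm_genericSymm hA]

lemma congruence_one : congruence (1 : Matrix (Fin n) (Fin n) K) = 1 := by
  rw [congruence, Matrix.map_one _ C_0 C_1, transpose_one, one_mul, mul_one, evalSymm_genericSymm]
  rfl

lemma congruence_mul (Q Q' : Matrix (Fin n) (Fin n) K) :
    congruence (Q * Q') = congruence Q * congruence Q' := by
  change _ = AlgHom.comp _ _
  conv_rhs => rw [congruence, evalSymm_comp_congruence
    (isSymm_transpose_mul_mul genericSymm_isSymm _), algebraMap_eq]
  rw [congruence, Matrix.map_mul, transpose_mul]
  simp only [mul_assoc]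

lemma congruence_symDiscr {Q : Matrix (Fin n) (Fin n) K} (hQ : Q * Qᵀ = 1) :
    congruence Q (symDiscr n K) = symDiscr n K := by
  have hQC : Q.map C * (Q.map C)ᵀ = (1 : Matrix (Fin n) (Fin n) (MvPolynomial (SymIdx n) K)) := by
    rw [← transpose_map, ← Matrix.map_mul, hQ, Matrix.map_one _ C_0 C_1]
  rw [congruence, evalSymm_symDiscr (isSymm_transpose_mul_mul genericSymm_isSymm _),
    matrix_discr_mul_mul hQC, symDiscr]

variable (n K) in
/-- The restriction of polynomials in the entries of a symmetric matrix to the diagonal matrices,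
whose diagonal entries are the variables of the target. -/
noncomputable def diagRestriction : MvPolynomial (SymIdx n) K →ₐ[K] MvPolynomial (Fin n) K :=
  evalSymm (diagonal X)

lemma constantCoeff_diagRestriction (f : MvPolynomial (SymIdx n) K) :
    constantCoeff (diagRestriction n K f) = constantCoeff f := by
  change (constantCoeff.comp (diagRestriction n K).toRingHom) f = constantCoeff f
  congr 1
  exact ringHom_ext (by simp)
    fun s ↦ by simp [diagRestriction, evalSymm, diagonal_apply, apply_ite]

lemma diagRestriction_symDiscr [Nontrivial K] :
    diagRestriction n K (symDiscr n K) =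
      ∏ ij : Fin n × Fin n with ij.1 < ij.2, (X ij.1 - X ij.2) ^ 2 := by
  rw [diagRestriction, evalSymm_symDiscr (isSymm_diagonal _), matrix_discr_diagonal]

end SymmetricMatrices

section OrthogonalInvariants

open MvPolynomial

variable {n : ℕ} {K : Type*} {i j k : Fin n}

lemma rename_swap_comp_diagRestriction [CommRing K] (hij : i ≠ j) :
    (rename (Equiv.swap i j)).comp (diagRestriction n K) =
      (diagRestriction n K).comp (congruence (planeRotation i j (0 : K) 1)) := by
  set R := planeRotation i j (0 : MvPolynomial (Fin n) K) 1
  have hmap : (planeRotation i j (0 : K) 1).map (algebraMap K (MvPolynomial (Fin n) K)) = R := by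
    rw [planeRotation_map, map_zero, map_one]
  have horth : Rᵀ * R = 1 := by
    rw [planeRotation_transpose, planeRotation_mul hij]
    simp [planeRotation_one_zero]
  have hdiag : (diagonal X).map (rename (R := K) (Equiv.swap i j)) =
      diagonal (X ∘ Equiv.swap i j) := by
    rw [diagonal_map (map_zero _)]
    congr 1
    ext
    simp
  rw [diagRestriction, evalSymm_comp_congruence (isSymm_diagonal _), hmap, mul_assoc,
    diagonal_mul_planeRotation_zero_one hij, ← mul_assoc, horth, one_mul, comp_evalSymm, hdiag]

variable [Field K] {ι : K}

/-- The torus of rotations of the `i`-`j` plane acting on polynomials in the entries of a symmetric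
matrix by congruence. -/
noncomputable def torusAction (h2 : (2 : K) ≠ 0) (hι : ι ^ 2 = -1) (hij : i ≠ j) :
    Kˣ →* (MvPolynomial (SymIdx n) K →ₐ[K] MvPolynomial (SymIdx n) K) where
  toFun t := congruence (rotationTorus h2 hι hij t)
  map_one' := by rw [map_one, congruence_one]
  map_mul' t u := by rw [map_mul, congruence_mul]

variable (h2 : (2 : K) ≠ 0) (hι : ι ^ 2 = -1) (hij : i ≠ j)

lemma torusAction_apply (t : Kˣ) :
    torusAction h2 hι hij t = congruence (rotationTorus h2 hι hij t) := rfl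

lemma torusAction_neg_one_mul (hik : i ≠ k) (hjk : j ≠ k) (t : Kˣ) :
    torusAction h2 hι hik (-1) * torusAction h2 hι hij t =
      torusAction h2 hι hij t⁻¹ * torusAction h2 hι hik (-1) := by
  simp only [torusAction_apply, ← congruence_mul, rotationTorus_neg_one_mul h2 hι hij hik hjk]

variable [IsAlgClosed K] {p q : MvPolynomial (SymIdx n) K}

lemma torusAction_apply_eq_of_dvd (hik : i ≠ k) (hjk : j ≠ k) (hp : p ≠ 0)
    (hinv : ∀ Q, Q * Qᵀ = 1 → congruence Q p = p) (hqp : q ∣ p) (t : Kˣ) :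
    torusAction h2 hι hij t q = q := by
  set δ := torusAction h2 hι hik (-1)
  set ρ := torusAction h2 hι hij
  have hassoc {l : Fin n} (hil : i ≠ l) (u : Kˣ) : Associated q (torusAction h2 hι hil u q) :=
    associated_apply_of_dvd_of_forall_apply_eq (torusAction h2 hι hil) hp
      (fun u ↦ hinv _ (rotationTorus_mul_transpose h2 hι hil u)) hqp u
  have hδδ (f) : δ (δ f) = f := by
    rw [← AlgHom.mul_apply, ← map_mul, neg_one_mul, neg_neg, map_one, AlgHom.one_apply]
  -- Writing `t = s ^ 2` reduces the claim to `ρ s q = ρ s⁻¹ q`, and conjugation by `δ` inverts `s`.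
  obtain ⟨s, rfl⟩ := RootableBy.surjective_pow Kˣ ℕ two_ne_zero t
  have hs : ρ s q = ρ s⁻¹ q := by
    apply Function.LeftInverse.injective hδδ
    rw [← AlgHom.mul_apply, torusAction_neg_one_mul h2 hι hij hik hjk, AlgHom.mul_apply,
      apply_apply_comm_of_associated (hassoc hij _) (hassoc hik _)]
  change ρ (s ^ 2) q = q
  rw [pow_two, map_mul, AlgHom.mul_apply, hs, ← AlgHom.mul_apply, ← map_mul, mul_inv_cancel,
    map_one, AlgHom.one_apply]

lemma diagRestriction_isSymmetric_of_dvd (h2 : (2 : K) ≠ 0) (hn : 3 ≤ n) (hp : p ≠ 0)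
    (hinv : ∀ Q, Q * Qᵀ = 1 → congruence Q p = p) (hqp : q ∣ p) :
    (diagRestriction n K q).IsSymmetric := by
  obtain ⟨ι, hι⟩ := IsAlgClosed.exists_pow_nat_eq (-1 : K) two_pos
  refine isSymmetric_of_forall_swap fun i j hij ↦ ?_
  obtain ⟨k, -, hk⟩ := Finset.exists_mem_notMem_of_card_lt_card (s := {i, j}) (t := Finset.univ)
    (Finset.card_le_two.trans_lt (by rwa [Finset.card_univ, Fintype.card_fin]))
  obtain ⟨t, ht⟩ := exists_rotationTorus_eq h2 hι hij
  rw [← AlgHom.comp_apply, rename_swap_comp_diagRestriction hij, ← ht, AlgHom.comp_apply,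
    ← torusAction_apply, torusAction_apply_eq_of_dvd h2 hι hij (k := k) (by grind) (by grind) hp
      hinv hqp]

end OrthogonalInvariants

section Irreducibility

open MvPolynomial

variable {n : ℕ} {K : Type*} [Field K]

lemma diagRestriction_symDiscr_ne_zero : diagRestriction n K (symDiscr n K) ≠ 0 := by
  rw [diagRestriction_symDiscr]
  exact Finset.prod_ne_zero_iff.mpr fun ij h ↦
    pow_ne_zero 2 (prime_X_sub_X (Finset.mem_filter.mp h).2.ne).ne_zero

lemma symDiscr_ne_zero : symDiscr n K ≠ 0 :=
  ne_zero_of_map diagRestriction_symDiscr_ne_zero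

lemma isUnit_of_dvd_symDiscr {f : MvPolynomial (SymIdx n) K} (hf : f ∣ symDiscr n K)
    (hdiag : IsUnit (diagRestriction n K f)) : IsUnit f := by
  have hunit : IsUnit (constantCoeff f) := by
    rw [← constantCoeff_diagRestriction]
    exact hdiag.map constantCoeff
  rw [eq_C_constantCoeff_of_dvd_of_scaling_eq symDiscr_ne_zero scaling_symDiscr hf hunit.ne_zero]
  exact hunit.map C

lemma not_isUnit_symDiscr (hn : 2 ≤ n) : ¬ IsUnit (symDiscr n K) := fun hunit ↦ by
  let i : Fin n := ⟨0, by lia⟩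
  let j : Fin n := ⟨1, by lia⟩
  have hdvd : (X i - X j) ^ 2 ∣ diagRestriction n K (symDiscr n K) := by
    rw [diagRestriction_symDiscr]
    exact Finset.dvd_prod_of_mem (fun ij : Fin n × Fin n ↦ (X ij.1 - X ij.2) ^ 2)
      (a := (i, j)) (by simp [i, j])
  exact (prime_X_sub_X (by simp [i, j])).not_isUnit
    (isUnit_of_dvd_unit ((dvd_pow_self _ two_ne_zero).trans hdvd) (hunit.map _))

lemma irreducible_symDiscr_of_isAlgClosed [IsAlgClosed K] (h2 : (2 : K) ≠ 0) (hn : 3 ≤ n) :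
    Irreducible (symDiscr n K) := by
  refine ⟨not_isUnit_symDiscr (by lia), fun f g hfg ↦ ?_⟩
  have hf : f ∣ symDiscr n K := ⟨g, hfg⟩
  have hg : g ∣ symDiscr n K := ⟨f, hfg.trans (mul_comm f g)⟩
  by_cases hunit : IsUnit (diagRestriction n K f)
  · exact .inl (isUnit_of_dvd_symDiscr hf hunit)
  refine .inr (isUnit_of_dvd_symDiscr hg ?_)
  have hsymm : (diagRestriction n K f).IsSymmetric :=
    diagRestriction_isSymmetric_of_dvd h2 hn symDiscr_ne_zero (fun _ ↦ congruence_symDiscr) hf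
  have hdvd : diagRestriction n K f ∣ diagRestriction n K (symDiscr n K) := map_dvd _ hf
  have hdvd' : diagRestriction n K (symDiscr n K) ∣ diagRestriction n K f := by
    rw [diagRestriction_symDiscr] at hdvd ⊢
    exact prod_X_sub_X_sq_dvd_of_isSymmetric h2 hsymm hunit hdvd
  refine isUnit_of_associated_mul (p := diagRestriction n K f) ?_
    (ne_zero_of_dvd_ne_zero diagRestriction_symDiscr_ne_zero hdvd)
  rw [← map_mul, ← hfg]
  exact associated_of_dvd_dvd hdvd' hdvd

lemma map_symDiscr {L : Type*} [Field L] (φ : K →+* L) : map φ (symDiscr n K) = symDiscr n L := by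
  rw [symDiscr, ← matrix_discr_map, symDiscr]
  congr 1
  ext
  simp [genericSymm]

lemma isLocalHom_map {σ L : Type*} [Field L] (φ : K →+* L) : IsLocalHom (map (σ := σ) φ) where
  map_nonunit f hf := by
    obtain ⟨c, hc, hfc⟩ := isUnit_iff_eq_C_of_isReduced.mp hf
    have hconst : φ (constantCoeff f) = c := by
      rw [← constantCoeff_map, hfc, constantCoeff_C]
    refine isUnit_iff_eq_C_of_isReduced.mpr ⟨constantCoeff f, ?_, ?_⟩
    · exact isUnit_of_map_unit φ _ (hconst ▸ hc)
    · exact map_injective φ φ.injective (by rw [hfc, map_C, hconst])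

theorem disc_irreducible_general (h2 : (2 : K) ≠ 0) (hn : 3 ≤ n) : Irreducible (symDiscr n K) := by
  let φ := algebraMap K (AlgebraicClosure K)
  have := isLocalHom_map (σ := SymIdx n) φ
  refine Irreducible.of_map (f := map φ) ?_
  rw [map_symDiscr]
  exact irreducible_symDiscr_of_isAlgClosed (map_ofNat φ 2 ▸ (map_ne_zero φ).mpr h2) hn

lemma eq_symDiscr_of_forall_eval {P : MvPolynomial (SymIdx n) ℂ}
    (hP : ∀ A : Matrix (Fin n) (Fin n) ℂ, A.IsSymm →
      eval (fun s ↦ A s.1.1 s.1.2) P = disc A.charpoly) : P = symDiscr n ℂ := by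
  refine MvPolynomial.funext fun x ↦ ?_
  have hx : (fun s : SymIdx n ↦ (genericSymm n ℂ).map (eval x) s.1.1 s.1.2) = x := by
    ext s
    simp [genericSymm, s.2]
  rw [← hx, hP _ (genericSymm_isSymm.map _), hx, disc_eq_discr (charpoly_monic _), symDiscr,
    ← matrix_discr_map, Matrix.discr]

end Irreducibility

/-- For `n ≥ 3`, the discriminant `disc : Sym²(ℂⁿ) → ℂ` — i.e. the polynomial `P` in the
entries of a symmetric matrix whose value at every complex symmetric matrix `A` is the
discriminant of the characteristic polynomial of `A` — is irreducible over `ℂ`. -/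
theorem disc_irreducible (n : ℕ) (hn : 3 ≤ n)
    (P : MvPolynomial (SymIdx n) ℂ)
    (hP : ∀ A : Matrix (Fin n) (Fin n) ℂ, A.IsSymm →
      MvPolynomial.eval (fun s => A s.1.1 s.1.2) P = disc A.charpoly) :
    Irreducible P := by
  rw [eq_symDiscr_of_forall_eval hP]
  exact disc_irreducible_general two_ne_zero hn
end
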